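/- arXiv:2003.11834 — 2 statements merged into one kernel-verified Lean document; each statement's English description precedes it below -/
import Mathlib

section
/- Let N ≥ 1 and let φ ∈ W^{2,1}(ℝ^N) satisfy ∫_{{x : φ(x) > 0}} Δφ(x) dx = 0. Then the positive part φ⁺ = max(φ,0) belongs to W^{2,1}(ℝ^N) and Δφ⁺ = 1_{{φ > 0}} · Δφ almost everywhere in ℝ^N. -/
open MeasureTheory Real Filter Topology

noncomputable section

/-- `ℝ^N` as a Euclidean space. -/
abbrev Euc (N : ℕ) := EuclideanSpace ℝ (Fin N)

/-- `g` is the weak (distributional) partial derivative of `f` in the `i`-th coordinate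
direction: `∫ f ∂ᵢψ = -∫ g ψ` for all smooth compactly supported test functions `ψ`. -/
def HasWeakPDeriv (N : ℕ) (f : Euc N → ℝ) (i : Fin N) (g : Euc N → ℝ) : Prop :=
  ∀ ψ : Euc N → ℝ, ContDiff ℝ (⊤ : ℕ∞) ψ → HasCompactSupport ψ →
    (∫ x, f x * fderiv ℝ ψ x (EuclideanSpace.single i 1)) = -∫ x, g x * ψ x

/- For smooth bounded nondecreasing `F`, the distribution `∂ⱼ(F(φ) gᵢ) - F(φ) hᵢⱼ` is, after
mollification, the function `F'(φ) gᵢ gⱼ`. By the arithmetic-geometric mean inequality its absolute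
value is at most the trace `F'(φ) ∑ₖ gₖ²`, and integration by parts shows that the integral of this
trace is `-∫ F(φ) ∑ₖ hₖₖ`. As `F` tends to the indicator function of `(0, ∞)`, the distribution
`∂ⱼ(1_{φ>0} gᵢ) - 1_{φ>0} hᵢⱼ` turns out to be a measure of total mass at most `-∫_{φ>0} Δφ`, which
is zero by hypothesis, and `1_{φ>0} gᵢ` is the weak derivative of `φ⁺` by the chain rule. -/

section L1Convergence

variable {α G : Type*} [MeasurableSpace α] {μ : Measure α} [NormedAddCommGroup G]

lemma tendsto_integral_norm_sub_of_dominated {F : ℕ → α → G} {f : α → G} (B : α → ℝ)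
    (hF : ∀ n, AEStronglyMeasurable (F n) μ) (hB : Integrable B μ)
    (hFB : ∀ n, ∀ᵐ x ∂μ, ‖F n x‖ ≤ B x)
    (hlim : ∀ᵐ x ∂μ, Tendsto (fun n => F n x) atTop (𝓝 (f x))) :
    Tendsto (fun n => ∫ x, ‖F n x - f x‖ ∂μ) atTop (𝓝 0) := by
  have hf : AEStronglyMeasurable f μ := aestronglyMeasurable_of_tendsto_ae atTop hF hlim
  have hbound : ∀ n, ∀ᵐ x ∂μ, ‖‖F n x - f x‖‖ ≤ 2 * B x := fun n => by
    filter_upwards [ae_all_iff.2 hFB, hlim] with x hx hlimx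
    have hfB : ‖f x‖ ≤ B x := le_of_tendsto' hlimx.norm hx
    rw [norm_norm]
    linarith [norm_sub_le (F n x) (f x), hx n]
  simpa using tendsto_integral_of_dominated_convergence (f := fun _ => (0 : ℝ)) (fun x => 2 * B x)
    (fun n => ((hF n).sub hf).norm) (hB.const_mul 2) hbound
    (hlim.mono fun x hx => by simpa using (hx.sub_const (f x)).norm)

lemma tendsto_integral_norm_sub_of_integral_norm_le {F : ℕ → α → G} {f : α → G}
    (hF : ∀ n, Integrable (F n) μ) (hf : Integrable f μ)
    (hle : ∀ n, ∫ x, ‖F n x‖ ∂μ ≤ ∫ x, ‖f x‖ ∂μ)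
    (hlim : ∀ᵐ x ∂μ, Tendsto (fun n => F n x) atTop (𝓝 (f x))) :
    Tendsto (fun n => ∫ x, ‖F n x - f x‖ ∂μ) atTop (𝓝 0) := by
  -- Dominated convergence applies to `‖F n - f‖ - ‖F n‖`, which is bounded by `‖f‖`.
  have hdom : Tendsto (fun n => ∫ x, (‖F n x - f x‖ - ‖F n x‖) ∂μ) atTop
      (𝓝 (∫ x, -‖f x‖ ∂μ)) := by
    refine tendsto_integral_of_dominated_convergence (fun x => ‖f x‖)
      (fun n => (((hF n).sub hf).norm.sub (hF n).norm).aestronglyMeasurable) hf.norm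
      (fun n => Eventually.of_forall fun x => ?_) ?_
    · simpa using abs_norm_sub_norm_le (F n x - f x) (F n x)
    · filter_upwards [hlim] with x hx
      simpa using (hx.sub_const (f x)).norm.sub hx.norm
  have hsum : Tendsto (fun n => ∫ x, (‖F n x - f x‖ - ‖F n x‖) ∂μ + ∫ x, ‖f x‖ ∂μ) atTop
      (𝓝 0) := by
    simpa [integral_neg] using hdom.add_const (∫ x, ‖f x‖ ∂μ)
  refine squeeze_zero (fun n => integral_nonneg fun x => norm_nonneg _) (fun n => ?_) hsum
  have hsub : ∫ x, (‖F n x - f x‖ - ‖F n x‖) ∂μ = ∫ x, ‖F n x - f x‖ ∂μ - ∫ x, ‖F n x‖ ∂μ :=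
    integral_sub ((hF n).sub hf).norm (hF n).norm
  linarith [hle n]

lemma tendsto_integral_of_tendsto_integral_norm_sub [NormedSpace ℝ G] {F : ℕ → α → G} {f : α → G}
    (hF : ∀ n, Integrable (F n) μ) (hf : Integrable f μ)
    (hlim : Tendsto (fun n => ∫ x, ‖F n x - f x‖ ∂μ) atTop (𝓝 0)) :
    Tendsto (fun n => ∫ x, F n x ∂μ) atTop (𝓝 (∫ x, f x ∂μ)) := by
  refine tendsto_iff_norm_sub_tendsto_zero.2
    (squeeze_zero (fun n => norm_nonneg _) (fun n => ?_) hlim)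
  rw [← integral_sub (hF n) hf]
  exact norm_integral_le_integral_norm _

lemma tendsto_integral_norm_mul_sub_mul {a c : ℕ → α → ℝ} {a' c' : α → ℝ} {C : ℝ}
    (ha : ∀ n, AEStronglyMeasurable (a n) μ) (haC : ∀ n x, ‖a n x‖ ≤ C)
    (halim : ∀ᵐ x ∂μ, Tendsto (fun n => a n x) atTop (𝓝 (a' x)))
    (hc : ∀ n, Integrable (c n) μ) (hc' : Integrable c' μ)
    (hclim : Tendsto (fun n => ∫ x, ‖c n x - c' x‖ ∂μ) atTop (𝓝 0)) :
    Tendsto (fun n => ∫ x, ‖a n x * c n x - a' x * c' x‖ ∂μ) atTop (𝓝 0) := by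
  have hac : Tendsto (fun n => ∫ x, ‖a n x * c' x - a' x * c' x‖ ∂μ) atTop (𝓝 0) :=
    tendsto_integral_norm_sub_of_dominated (fun x => C * ‖c' x‖)
      (fun n => (ha n).mul hc'.aestronglyMeasurable) (hc'.norm.const_mul C)
      (fun n => Eventually.of_forall fun x => by
        rw [norm_mul]; exact mul_le_mul_of_nonneg_right (haC n x) (norm_nonneg _))
      (halim.mono fun x hx => hx.mul_const _)
  have ha' : AEStronglyMeasurable a' μ := aestronglyMeasurable_of_tendsto_ae atTop ha halim
  have ha'C : ∀ᵐ x ∂μ, ‖a' x‖ ≤ C :=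
    halim.mono fun x hx => le_of_tendsto' hx.norm fun n => haC n x
  have hac_int : ∀ n, Integrable (fun x => ‖a n x * c' x - a' x * c' x‖) μ := fun n =>
    ((hc'.bdd_mul (ha n) (Eventually.of_forall (haC n))).sub (hc'.bdd_mul ha' ha'C)).norm
  have hc_int : ∀ n, Integrable (fun x => C * ‖c n x - c' x‖) μ := fun n =>
    ((hc n).sub hc').norm.const_mul C
  have hsum : Tendsto (fun n => C * ∫ x, ‖c n x - c' x‖ ∂μ +
      ∫ x, ‖a n x * c' x - a' x * c' x‖ ∂μ) atTop (𝓝 0) := by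
    simpa only [mul_zero, add_zero] using (hclim.const_mul C).add hac
  refine squeeze_zero (fun n => integral_nonneg fun x => norm_nonneg _) (fun n => ?_) hsum
  rw [← integral_const_mul, ← integral_add (hc_int n) (hac_int n)]
  refine integral_mono_of_nonneg (Eventually.of_forall fun x => norm_nonneg _)
    ((hc_int n).add (hac_int n)) (Eventually.of_forall fun x => ?_)
  calc ‖a n x * c n x - a' x * c' x‖
      = ‖a n x * (c n x - c' x) + (a n x * c' x - a' x * c' x)‖ := by congr 1; ring
    _ ≤ ‖a n x * (c n x - c' x)‖ + ‖a n x * c' x - a' x * c' x‖ := norm_add_le _ _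
    _ ≤ C * ‖c n x - c' x‖ + ‖a n x * c' x - a' x * c' x‖ := by
      rw [norm_mul]
      gcongr
      exact haC n x

lemma tendsto_integral_mul_of_hasCompactSupport [TopologicalSpace α]
    [OpensMeasurableSpace α] {r : ℕ → α → ℝ} {r' m : α → ℝ}
    (hr : ∀ n, Integrable (r n) μ) (hr' : Integrable r' μ)
    (hrlim : Tendsto (fun n => ∫ x, ‖r n x - r' x‖ ∂μ) atTop (𝓝 0))
    (hm : Continuous m) (hmc : HasCompactSupport m) :
    Tendsto (fun n => ∫ x, r n x * m x ∂μ) atTop (𝓝 (∫ x, r' x * m x ∂μ)) := by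
  obtain ⟨C, hC⟩ := hmc.exists_bound_of_continuous hm
  have hint : ∀ {s : α → ℝ}, Integrable s μ → Integrable (fun x => m x * s x) μ := fun hs =>
    hs.bdd_mul hm.aestronglyMeasurable (Eventually.of_forall hC)
  simpa only [mul_comm] using tendsto_integral_of_tendsto_integral_norm_sub
    (fun n => hint (hr n)) (hint hr') (tendsto_integral_norm_mul_sub_mul
      (fun _ => hm.aestronglyMeasurable) (fun _ => hC)
      (Eventually.of_forall fun _ => tendsto_const_nhds) hr hr' hrlim)

end L1Convergence

section BoundedComposition

variable {α : Type*} {F : ℝ → ℝ} {f r : α → ℝ}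

lemma exists_bound_comp_of_continuous (hF : Continuous F) (hf : ∃ M, ∀ x, ‖f x‖ ≤ M) :
    ∃ B, ∀ x, ‖F (f x)‖ ≤ B := by
  obtain ⟨M, hM⟩ := hf
  obtain ⟨B, hB⟩ :=
    isCompact_Icc.exists_bound_of_continuousOn (hF.continuousOn (s := Set.Icc (-M) M))
  exact ⟨B, fun x => hB _ (abs_le.1 (hM x))⟩

variable [MeasurableSpace α] {μ : Measure α}

lemma integrable_comp_mul (hF : Continuous F) (hf : AEStronglyMeasurable f μ) {B : ℝ}
    (hB : ∀ x, ‖F (f x)‖ ≤ B) (hr : Integrable r μ) : Integrable (fun x => F (f x) * r x) μ :=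
  hr.bdd_mul (hF.comp_aestronglyMeasurable hf) (Eventually.of_forall hB)

lemma integrable_comp_mul_of_bounded (hF : Continuous F) (hf : AEStronglyMeasurable f μ)
    (hfb : ∃ M, ∀ x, ‖f x‖ ≤ M) (hr : Integrable r μ) :
    Integrable (fun x => F (f x) * r x) μ :=
  let ⟨_, hB⟩ := exists_bound_comp_of_continuous hF hfb
  integrable_comp_mul hF hf hB hr

end BoundedComposition

section WeakDerivative

variable {E : Type*} [NormedAddCommGroup E] [NormedSpace ℝ E]

lemma continuous_fderiv_apply_of_contDiff {f : E → ℝ} (hf : ContDiff ℝ 1 f) (v : E) :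
    Continuous fun x => fderiv ℝ f x v :=
  (hf.continuous_fderiv one_ne_zero).clm_apply continuous_const

variable [MeasurableSpace E]

/-- `g` is the weak derivative of `f` in the direction `v` with respect to `μ`. For Lebesgue measure
and `v` a vector of the standard basis of `ℝ^N` this unfolds to `HasWeakPDeriv`. -/
def HasWeakLineDeriv (μ : Measure E) (v : E) (f g : E → ℝ) : Prop :=
  ∀ ψ : E → ℝ, ContDiff ℝ (⊤ : ℕ∞) ψ → HasCompactSupport ψ →
    (∫ x, f x * fderiv ℝ ψ x v ∂μ) = -∫ x, g x * ψ x ∂μ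

/-- The value at the test function `ψ` of the distribution `q - ∂ᵥ p`, which measures how far `q` is
from being the weak derivative of `p` in the direction `v`. -/
def weakLineDerivDefect (μ : Measure E) (v : E) (p q ψ : E → ℝ) : ℝ :=
  ∫ x, p x * fderiv ℝ ψ x v ∂μ + ∫ x, q x * ψ x ∂μ

variable {μ : Measure E} {v : E}

lemma hasWeakLineDeriv_iff_defect_eq_zero {p q : E → ℝ} :
    HasWeakLineDeriv μ v p q ↔ ∀ ψ : E → ℝ, ContDiff ℝ (⊤ : ℕ∞) ψ → HasCompactSupport ψ →
      weakLineDerivDefect μ v p q ψ = 0 := by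
  simp only [HasWeakLineDeriv, weakLineDerivDefect, eq_neg_iff_add_eq_zero]

variable [BorelSpace E]

lemma tendsto_weakLineDerivDefect {p q : ℕ → E → ℝ} {p' q' ψ : E → ℝ}
    (hp : ∀ n, Integrable (p n) μ) (hp' : Integrable p' μ)
    (hplim : Tendsto (fun n => ∫ x, ‖p n x - p' x‖ ∂μ) atTop (𝓝 0))
    (hq : ∀ n, Integrable (q n) μ) (hq' : Integrable q' μ)
    (hqlim : Tendsto (fun n => ∫ x, ‖q n x - q' x‖ ∂μ) atTop (𝓝 0))
    (hψ : ContDiff ℝ 1 ψ) (hψc : HasCompactSupport ψ) :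
    Tendsto (fun n => weakLineDerivDefect μ v (p n) (q n) ψ) atTop
      (𝓝 (weakLineDerivDefect μ v p' q' ψ)) :=
  (tendsto_integral_mul_of_hasCompactSupport hp hp' hplim
      (continuous_fderiv_apply_of_contDiff hψ v) (hψc.fderiv_apply (𝕜 := ℝ) v)).add
    (tendsto_integral_mul_of_hasCompactSupport hq hq' hqlim hψ.continuous hψc)

lemma HasWeakLineDeriv.of_tendsto {p q : ℕ → E → ℝ} {p' q' : E → ℝ}
    (hpq : ∀ n, HasWeakLineDeriv μ v (p n) (q n))
    (hp : ∀ n, Integrable (p n) μ) (hp' : Integrable p' μ)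
    (hplim : Tendsto (fun n => ∫ x, ‖p n x - p' x‖ ∂μ) atTop (𝓝 0))
    (hq : ∀ n, Integrable (q n) μ) (hq' : Integrable q' μ)
    (hqlim : Tendsto (fun n => ∫ x, ‖q n x - q' x‖ ∂μ) atTop (𝓝 0)) :
    HasWeakLineDeriv μ v p' q' := by
  refine hasWeakLineDeriv_iff_defect_eq_zero.2 fun ψ hψ hψc => ?_
  refine tendsto_nhds_unique (tendsto_weakLineDerivDefect hp hp' hplim hq hq' hqlim
    (hψ.of_le (mod_cast le_top)) hψc) ?_
  simp only [hasWeakLineDeriv_iff_defect_eq_zero.1 (hpq _) ψ hψ hψc, tendsto_const_nhds]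

end WeakDerivative

section Mollification

open scoped Convolution

variable {E : Type*} [NormedAddCommGroup E] [NormedSpace ℝ E] [FiniteDimensional ℝ E]
  [MeasurableSpace E]

/-- The mollification of `f` by the bump function `b`, normalised to have integral one. -/
def mollify (μ : Measure E) (b : ContDiffBump (0 : E)) (f : E → ℝ) : E → ℝ :=
  b.normed μ ⋆[ContinuousLinearMap.lsmul ℝ ℝ, μ] f

variable [BorelSpace E] {μ : Measure E} [μ.IsAddHaarMeasure] (b : ContDiffBump (0 : E))
  {f g : E → ℝ} {v : E}

lemma mollify_apply (f : E → ℝ) (x : E) :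
    mollify μ b f x = ∫ t, b.normed μ (x - t) * f t ∂μ := by
  simp only [mollify, convolution_lsmul_swap, smul_eq_mul]

lemma integrable_mollify (hf : Integrable f μ) : Integrable (mollify μ b f) μ :=
  b.integrable_normed.integrable_convolution _ hf

lemma contDiff_mollify (hf : LocallyIntegrable f μ) : ContDiff ℝ 1 (mollify μ b f) :=
  b.hasCompactSupport_normed.contDiff_convolution_left _ b.contDiff_normed hf

lemma exists_bound_mollify (hf : Integrable f μ) : ∃ C, ∀ x, ‖mollify μ b f x‖ ≤ C := by
  obtain ⟨C, hC⟩ := b.hasCompactSupport_normed.exists_bound_of_continuous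
    (b.continuous_normed (μ := μ))
  refine ⟨∫ t, C * ‖f t‖ ∂μ, fun x => ?_⟩
  rw [mollify_apply]
  refine norm_integral_le_of_norm_le (hf.norm.const_mul C) (Eventually.of_forall fun t => ?_)
  rw [norm_mul]
  exact mul_le_mul_of_nonneg_right (hC _) (norm_nonneg _)

lemma integral_norm_mollify_le (hf : Integrable f μ) :
    ∫ x, ‖mollify μ b f x‖ ∂μ ≤ ∫ x, ‖f x‖ ∂μ := by
  have hnorm : ∫ x, mollify μ b (fun y => ‖f y‖) x ∂μ = ∫ x, ‖f x‖ ∂μ := by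
    simp only [mollify, integral_convolution _ b.integrable_normed hf.norm, b.integral_normed,
      ContinuousLinearMap.lsmul_apply, one_smul]
  rw [← hnorm]
  refine integral_mono (integrable_mollify b hf).norm (integrable_mollify b hf.norm) fun x => ?_
  simp only [mollify_apply]
  refine (norm_integral_le_integral_norm _).trans_eq ?_
  simp only [norm_mul, Real.norm_of_nonneg (b.nonneg_normed _)]

lemma fderiv_mollify_apply (hf : LocallyIntegrable f μ) (v x : E) :
    fderiv ℝ (mollify μ b f) x v = ∫ t, fderiv ℝ (b.normed μ) (x - t) v * f t ∂μ := by
  have hex := (b.hasCompactSupport_normed (μ := μ)).fderiv (𝕜 := ℝ) |>.convolutionExists_left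
    ((ContinuousLinearMap.lsmul ℝ ℝ : ℝ →L[ℝ] ℝ →L[ℝ] ℝ).precompL E)
    ((b.contDiff_normed (μ := μ) (n := 1)).continuous_fderiv one_ne_zero) hf x
  have hderiv := (b.hasCompactSupport_normed.hasFDerivAt_convolution_left
    (ContinuousLinearMap.lsmul ℝ ℝ) (b.contDiff_normed (μ := μ) (n := 1)) hf x).fderiv
  rw [mollify, hderiv, convolution_eq_swap, ContinuousLinearMap.integral_apply hex.integrable_swap]
  simp only [ContinuousLinearMap.precompL_apply, ContinuousLinearMap.lsmul_apply, smul_eq_mul]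

lemma fderiv_mollify_of_hasWeakLineDeriv (hf : LocallyIntegrable f μ)
    (hfg : HasWeakLineDeriv μ v f g) (x : E) :
    fderiv ℝ (mollify μ b f) x v = mollify μ b g x := by
  have hc : HasCompactSupport fun t => b.normed μ (x - t) :=
    b.hasCompactSupport_normed.comp_homeomorph (Homeomorph.subLeft x)
  have hd : ContDiff ℝ (⊤ : ℕ∞) fun t => b.normed μ (x - t) :=
    (b.contDiff_normed (n := ⊤)).comp (contDiff_const.sub contDiff_id)
  have hfderiv : ∀ t, fderiv ℝ (fun t => b.normed μ (x - t)) t v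
      = -fderiv ℝ (b.normed μ) (x - t) v := fun t => by
    have hderiv := (((b.contDiff_normed (μ := μ) (n := 1)).differentiable one_ne_zero
      (x - t)).hasFDerivAt.comp t ((hasFDerivAt_id t).const_sub x)).fderiv
    simpa only [Function.comp_def, id_eq, ContinuousLinearMap.comp_apply,
      neg_apply, ContinuousLinearMap.id_apply, map_neg] using
      congrArg (· v) hderiv
  have hweak := hfg _ hd hc
  simp only [hfderiv, mul_neg, integral_neg, neg_inj] at hweak
  simpa only [fderiv_mollify_apply b hf, mollify_apply, mul_comm] using hweak

/-- Bump functions shrinking to the origin, with ratio of radii kept fixed as required for almost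
everywhere convergence of the mollifications. -/
def shrinkingBump (E : Type*) [NormedAddCommGroup E] (n : ℕ) : ContDiffBump (0 : E) where
  rIn := 1 / ((n : ℝ) + 1)
  rOut := 2 * (1 / ((n : ℝ) + 1))
  rIn_pos := by positivity
  rIn_lt_rOut := lt_two_mul_self (by positivity)

lemma ae_tendsto_mollify (hf : LocallyIntegrable f μ) :
    ∀ᵐ x ∂μ, Tendsto (fun n => mollify μ (shrinkingBump E n) f x) atTop (𝓝 (f x)) := by
  refine ContDiffBump.ae_convolution_tendsto_right_of_locallyIntegrable (K := 2) ?_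
    (Eventually.of_forall fun n => le_rfl) hf
  simpa only [shrinkingBump, mul_zero] using
    (tendsto_one_div_add_atTop_nhds_zero_nat (𝕜 := ℝ)).const_mul 2

lemma tendsto_integral_norm_mollify_sub (hf : Integrable f μ) :
    Tendsto (fun n => ∫ x, ‖mollify μ (shrinkingBump E n) f x - f x‖ ∂μ) atTop (𝓝 0) :=
  tendsto_integral_norm_sub_of_integral_norm_le (fun _ => integrable_mollify _ hf) hf
    (fun _ => integral_norm_mollify_le _ hf) (ae_tendsto_mollify hf.locallyIntegrable)

lemma tendsto_integral_norm_comp_mollify_mul_sub {A : ℝ → ℝ} (hA : Continuous A) {C : ℝ}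
    (hAC : ∀ s, ‖A s‖ ≤ C) (hf : LocallyIntegrable f μ) (hg : Integrable g μ) :
    Tendsto (fun n => ∫ x, ‖A (mollify μ (shrinkingBump E n) f x) *
      mollify μ (shrinkingBump E n) g x - A (f x) * g x‖ ∂μ) atTop (𝓝 0) :=
  tendsto_integral_norm_mul_sub_mul
    (fun _ => (hA.comp (contDiff_mollify _ hf).continuous).aestronglyMeasurable)
    (fun _ _ => hAC _) ((ae_tendsto_mollify hf).mono fun _ hx => (hA.tendsto _).comp hx)
    (fun _ => integrable_mollify _ hg) hg (tendsto_integral_norm_mollify_sub hg)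

end Mollification

section ChainRule

variable {E : Type*} [NormedAddCommGroup E] [NormedSpace ℝ E] {F : ℝ → ℝ} {u w : E → ℝ} {v : E}

lemma fderiv_comp_apply_eq_deriv_mul (hF : Differentiable ℝ F) (hu : Differentiable ℝ u)
    (x v : E) : fderiv ℝ (fun y => F (u y)) x v = deriv F (u x) * fderiv ℝ u x v := by
  have hderiv := ((hF (u x)).hasDerivAt.comp_hasFDerivAt x (hu x).hasFDerivAt).fderiv
  simpa only [Function.comp_def, smul_apply, smul_eq_mul] using
    congrArg (· v) hderiv

variable [FiniteDimensional ℝ E] [MeasurableSpace E] [BorelSpace E] {μ : Measure E}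
  [μ.IsAddHaarMeasure]

lemma integral_comp_mul_fderiv_eq_neg (hF : Differentiable ℝ F) (hu : Differentiable ℝ u)
    (hw : Differentiable ℝ w)
    (hFw' : Integrable (fun x => F (u x) * fderiv ℝ w x v) μ)
    (hF'w : Integrable (fun x => deriv F (u x) * (fderiv ℝ u x v * w x)) μ)
    (hFw : Integrable (fun x => F (u x) * w x) μ) :
    ∫ x, F (u x) * fderiv ℝ w x v ∂μ = -∫ x, deriv F (u x) * (fderiv ℝ u x v * w x) ∂μ := by
  have hderiv : ∀ x, fderiv ℝ (fun y => F (u y)) x v * w x =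
      deriv F (u x) * (fderiv ℝ u x v * w x) := fun x => by
    rw [fderiv_comp_apply_eq_deriv_mul hF hu, mul_assoc]
  simpa only [hderiv] using integral_mul_fderiv_eq_neg_fderiv_mul_of_integrable
    (by simpa only [hderiv] using hF'w) hFw' hFw (fun x _ => hF.comp hu x) (fun x _ => hw x)

lemma integral_comp_mul_fderiv_eq_neg_of_hasCompactSupport (hF : ContDiff ℝ 1 F)
    (hu : ContDiff ℝ 1 u) (hw : ContDiff ℝ 1 w) (hwc : HasCompactSupport w) :
    ∫ x, F (u x) * fderiv ℝ w x v ∂μ = -∫ x, deriv F (u x) * (fderiv ℝ u x v * w x) ∂μ := by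
  have hFu : Continuous fun x => F (u x) := hF.continuous.comp hu.continuous
  have hF'u : Continuous fun x => deriv F (u x) := hF.continuous_deriv_one.comp hu.continuous
  have hu'w : Continuous fun x => fderiv ℝ u x v * w x :=
    (continuous_fderiv_apply_of_contDiff hu v).mul hw.continuous
  exact integral_comp_mul_fderiv_eq_neg (hF.differentiable one_ne_zero)
    (hu.differentiable one_ne_zero) (hw.differentiable one_ne_zero)
    ((hFu.mul (continuous_fderiv_apply_of_contDiff hw v)).integrable_of_hasCompactSupport
      (hwc.fderiv_apply ℝ v).mul_left)
    ((hF'u.mul hu'w).integrable_of_hasCompactSupport hwc.mul_left.mul_left)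
    ((hFu.mul hw.continuous).integrable_of_hasCompactSupport hwc.mul_left)

lemma hasWeakLineDeriv_comp_of_contDiff (hF : ContDiff ℝ 1 F) (hu : ContDiff ℝ 1 u) :
    HasWeakLineDeriv μ v (fun x => F (u x)) (fun x => deriv F (u x) * fderiv ℝ u x v) := by
  intro ψ hψ hψc
  simpa only [mul_assoc] using integral_comp_mul_fderiv_eq_neg_of_hasCompactSupport hF hu
    (hψ.of_le (mod_cast le_top)) hψc

lemma HasWeakLineDeriv.comp {φ g : E → ℝ} (hφg : HasWeakLineDeriv μ v φ g)
    (hφ : Integrable φ μ) (hg : Integrable g μ) (hF : ContDiff ℝ 1 F) (hF0 : F 0 = 0) {K : ℝ}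
    (hK : ∀ s, ‖deriv F s‖ ≤ K) :
    HasWeakLineDeriv μ v (fun x => F (φ x)) (fun x => deriv F (φ x) * g x) := by
  have hF' : Continuous (deriv F) := hF.continuous_deriv_one
  have hlip : ∀ s t, ‖F t - F s‖ ≤ K * ‖t - s‖ := fun s t =>
    convex_univ.norm_image_sub_le_of_norm_deriv_le
      (fun x _ => hF.differentiable one_ne_zero x) (fun x _ => hK x) trivial trivial
  have hFint : ∀ {f : E → ℝ}, Integrable f μ → Integrable (fun x => F (f x)) μ := fun {f} hf =>
    (hf.norm.const_mul K).mono' (hF.continuous.comp_aestronglyMeasurable hf.aestronglyMeasurable)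
      (Eventually.of_forall fun x => by simpa [hF0] using hlip 0 (f x))
  have hF'int : ∀ {f r : E → ℝ}, Integrable f μ → Integrable r μ →
      Integrable (fun x => deriv F (f x) * r x) μ := fun hf hr =>
    integrable_comp_mul hF' hf.aestronglyMeasurable (fun _ => hK _) hr
  have hint := fun n => integrable_mollify (shrinkingBump E n) hφ
  refine .of_tendsto (p := fun n x => F (mollify μ (shrinkingBump E n) φ x))
    (q := fun n x =>
      deriv F (mollify μ (shrinkingBump E n) φ x) * mollify μ (shrinkingBump E n) g x)
    (fun n => ?_) (fun n => hFint (hint n)) (hFint hφ) ?_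
    (fun n => hF'int (hint n) (integrable_mollify _ hg)) (hF'int hφ hg)
    (tendsto_integral_norm_comp_mollify_mul_sub hF' hK hφ.locallyIntegrable hg)
  · simpa only [fderiv_mollify_of_hasWeakLineDeriv _ hφ.locallyIntegrable hφg] using
      hasWeakLineDeriv_comp_of_contDiff (μ := μ) (v := v) hF
        (contDiff_mollify (shrinkingBump E n) hφ.locallyIntegrable)
  · refine squeeze_zero (fun n => integral_nonneg fun x => norm_nonneg _) (fun n => ?_)
      (by simpa only [mul_zero] using (tendsto_integral_norm_mollify_sub (μ := μ) hφ).const_mul K)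
    rw [← integral_const_mul]
    exact integral_mono ((hFint (hint n)).sub (hFint hφ)).norm
      (((hint n).sub hφ).norm.const_mul K) fun x => hlip _ _

end ChainRule

section SmoothStep

lemma tendsto_smoothTransition_natCast_mul (s : ℝ) :
    Tendsto (fun k : ℕ => smoothTransition (k * s)) atTop (𝓝 ((Set.Ioi 0).indicator 1 s)) := by
  rcases le_or_gt s 0 with hs | hs
  · rw [Set.indicator_of_notMem (Set.notMem_Ioi.2 hs)]
    exact tendsto_const_nhds.congr fun k =>
      (smoothTransition.zero_of_nonpos (mul_nonpos_of_nonneg_of_nonpos k.cast_nonneg hs)).symm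
  · rw [Set.indicator_of_mem (Set.mem_Ioi.2 hs)]
    refine tendsto_const_nhds.congr' ?_
    filter_upwards [(tendsto_natCast_atTop_atTop.atTop_mul_const hs).eventually_ge_atTop 1]
      with k hk
    exact (smoothTransition.one_of_one_le hk).symm

lemma norm_smoothTransition_le_one (s : ℝ) : ‖smoothTransition s‖ ≤ 1 := by
  rw [Real.norm_of_nonneg (smoothTransition.nonneg s)]
  exact smoothTransition.le_one s

lemma contDiff_smoothTransition_natCast_mul (k : ℕ) :
    ContDiff ℝ 1 fun s => smoothTransition (k * s) :=
  smoothTransition.contDiff.comp (contDiff_const.mul contDiff_id)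

/-- A `C¹` approximation of the positive part, whose derivative is a smooth approximation of the
Heaviside function. -/
def smoothRamp (k : ℕ) (s : ℝ) : ℝ := ∫ t in (0 : ℝ)..s, smoothTransition (k * t)

lemma deriv_smoothRamp (k : ℕ) : deriv (smoothRamp k) = fun s => smoothTransition (k * s) :=
  funext fun s => (contDiff_smoothTransition_natCast_mul k).continuous.deriv_integral _ 0 s

lemma contDiff_smoothRamp (k : ℕ) : ContDiff ℝ 1 (smoothRamp k) := by
  have hcont := (contDiff_smoothTransition_natCast_mul k).continuous
  refine contDiff_one_iff_deriv.2 ⟨fun s => ?_, by rwa [deriv_smoothRamp]⟩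
  exact (hcont.integral_hasStrictDerivAt 0 s).hasDerivAt.differentiableAt

lemma norm_smoothRamp_le (k : ℕ) (s : ℝ) : ‖smoothRamp k s‖ ≤ ‖s‖ := by
  simpa only [smoothRamp, one_mul, sub_zero, Real.norm_eq_abs] using
    intervalIntegral.norm_integral_le_of_norm_le_const (a := 0) (b := s)
    fun t _ => norm_smoothTransition_le_one (k * t)

lemma tendsto_smoothRamp (s : ℝ) : Tendsto (fun k => smoothRamp k s) atTop (𝓝 (max s 0)) := by
  have hlim : Tendsto (fun k => smoothRamp k s) atTop
      (𝓝 (∫ t in (0 : ℝ)..s, (Set.Ioi 0).indicator 1 t)) :=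
    intervalIntegral.tendsto_integral_filter_of_dominated_convergence (fun _ => 1)
      (Eventually.of_forall fun k =>
        (contDiff_smoothTransition_natCast_mul k).continuous.aestronglyMeasurable)
      (Eventually.of_forall fun k => Eventually.of_forall fun t _ =>
        norm_smoothTransition_le_one _)
      intervalIntegrable_const
      (Eventually.of_forall fun t _ => tendsto_smoothTransition_natCast_mul t)
  convert hlim using 2
  rcases le_total s 0 with hs | hs
  · rw [max_eq_right hs, intervalIntegral.integral_of_ge hs,
      setIntegral_indicator measurableSet_Ioi, Set.Ioc_inter_Ioi, max_eq_right hs, Set.Ioc_self,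
      setIntegral_empty, neg_zero]
  · rw [max_eq_left hs, intervalIntegral.integral_of_le hs, setIntegral_indicator measurableSet_Ioi,
      Set.Ioc_inter_Ioi, max_self]
    simp [hs]

end SmoothStep

section PositivityTruncation

variable {α : Type*} [MeasurableSpace α] {μ : Measure α} {φ c : α → ℝ}

lemma nullMeasurableSet_pos (hφ : AEMeasurable φ μ) : NullMeasurableSet {x | 0 < φ x} μ :=
  nullMeasurableSet_lt aemeasurable_const hφ

lemma integrable_smoothTransition_comp_mul (hφ : AEStronglyMeasurable φ μ) (hc : Integrable c μ)
    (k : ℕ) : Integrable (fun x => smoothTransition (k * φ x) * c x) μ :=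
  integrable_comp_mul (F := fun s => smoothTransition (k * s))
    (contDiff_smoothTransition_natCast_mul k).continuous hφ
    (fun _ => norm_smoothTransition_le_one _) hc

lemma tendsto_integral_norm_smoothTransition_comp_mul_sub (hφ : AEStronglyMeasurable φ μ)
    (hc : Integrable c μ) :
    Tendsto (fun k : ℕ => ∫ x, ‖smoothTransition (k * φ x) * c x -
      {x | 0 < φ x}.indicator c x‖ ∂μ) atTop (𝓝 0) := by
  refine tendsto_integral_norm_sub_of_dominated (fun x => ‖c x‖)
    (fun k => (integrable_smoothTransition_comp_mul hφ hc k).aestronglyMeasurable) hc.norm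
    (fun k => Eventually.of_forall fun x => ?_) (Eventually.of_forall fun x => ?_)
  · rw [norm_mul]
    exact mul_le_of_le_one_left (norm_nonneg _) (norm_smoothTransition_le_one _)
  · have hlim := (tendsto_smoothTransition_natCast_mul (φ x)).mul_const (c x)
    by_cases hx : 0 < φ x <;> simpa [hx, Set.indicator] using hlim

lemma tendsto_integral_norm_smoothRamp_comp_sub (hφ : Integrable φ μ) :
    Tendsto (fun k => ∫ x, ‖smoothRamp k (φ x) - max (φ x) 0‖ ∂μ) atTop (𝓝 0) :=
  tendsto_integral_norm_sub_of_dominated (fun x => ‖φ x‖)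
    (fun k => (contDiff_smoothRamp k).continuous.comp_aestronglyMeasurable
      hφ.aestronglyMeasurable) hφ.norm
    (fun k => Eventually.of_forall fun x => norm_smoothRamp_le k (φ x))
    (Eventually.of_forall fun x => tendsto_smoothRamp (φ x))

end PositivityTruncation

section PositivePart

variable {E : Type*} [NormedAddCommGroup E] [NormedSpace ℝ E] [FiniteDimensional ℝ E]
  [MeasurableSpace E] [BorelSpace E] {μ : Measure E} [μ.IsAddHaarMeasure] {v : E} {φ g : E → ℝ}

lemma HasWeakLineDeriv.posPart (hφg : HasWeakLineDeriv μ v φ g) (hφ : Integrable φ μ)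
    (hg : Integrable g μ) :
    HasWeakLineDeriv μ v (fun x => max (φ x) 0) ({x | 0 < φ x}.indicator g) := by
  have hramp : ∀ k : ℕ, HasWeakLineDeriv μ v (fun x => smoothRamp k (φ x))
      (fun x => smoothTransition (k * φ x) * g x) := fun k => by
    simpa only [deriv_smoothRamp] using hφg.comp hφ hg (contDiff_smoothRamp k)
      intervalIntegral.integral_same
      (fun s => by simpa only [deriv_smoothRamp] using norm_smoothTransition_le_one (k * s))
  have hramp_int : ∀ k, Integrable (fun x => smoothRamp k (φ x)) μ := fun k =>
    hφ.mono ((contDiff_smoothRamp k).continuous.comp_aestronglyMeasurable hφ.aestronglyMeasurable)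
      (Eventually.of_forall fun x => norm_smoothRamp_le k (φ x))
  exact .of_tendsto hramp hramp_int hφ.pos_part (tendsto_integral_norm_smoothRamp_comp_sub hφ)
    (integrable_smoothTransition_comp_mul hφ.aestronglyMeasurable hg)
    (hg.indicator₀ (nullMeasurableSet_pos hφ.aemeasurable))
    (tendsto_integral_norm_smoothTransition_comp_mul_sub hφ.aestronglyMeasurable hg)

end PositivePart

section KatoEstimate

variable {E ι : Type*} [NormedAddCommGroup E] [NormedSpace ℝ E] [FiniteDimensional ℝ E]
  [MeasurableSpace E] [BorelSpace E] {μ : Measure E} [μ.IsAddHaarMeasure] {F : ℝ → ℝ}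
  {u w ψ : E → ℝ}

lemma abs_mul_le_sum_sq [Fintype ι] (a : ι → ℝ) (i j : ι) : |a i * a j| ≤ ∑ k, a k ^ 2 := by
  have hle : ∀ k, a k ^ 2 ≤ ∑ k, a k ^ 2 := fun k =>
    Finset.single_le_sum (f := fun k => a k ^ 2) (fun k _ => sq_nonneg _) (Finset.mem_univ k)
  have hamgm := two_mul_le_add_sq |a i| |a j|
  rw [sq_abs, sq_abs] at hamgm
  rw [abs_mul]
  linarith [hle i, hle j]

lemma integral_comp_mul_fderiv_eq_neg_sq {v : E} (hF : ContDiff ℝ 1 F) (hu : ContDiff ℝ 1 u)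
    (hub : ∃ M, ∀ x, ‖u x‖ ≤ M) (huw : ∀ x, fderiv ℝ u x v = w x) (hw : Differentiable ℝ w)
    (hwi : Integrable w μ) (hw2 : Integrable (fun x => w x ^ 2) μ)
    (hw' : Integrable (fun x => fderiv ℝ w x v) μ) :
    ∫ x, F (u x) * fderiv ℝ w x v ∂μ = -∫ x, deriv F (u x) * w x ^ 2 ∂μ := by
  have hsq : ∀ x, fderiv ℝ u x v * w x = w x ^ 2 := fun x => by rw [huw, sq]
  have huc : AEStronglyMeasurable u μ := hu.continuous.aestronglyMeasurable
  have hF'w := integrable_comp_mul_of_bounded hF.continuous_deriv_one huc hub hw2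
  simpa only [hsq] using integral_comp_mul_fderiv_eq_neg (hF.differentiable one_ne_zero)
    (hu.differentiable one_ne_zero) hw
    (integrable_comp_mul_of_bounded hF.continuous huc hub hw')
    (by simpa only [hsq] using hF'w)
    (integrable_comp_mul_of_bounded hF.continuous huc hub hwi)

lemma weakLineDerivDefect_comp_mul {v : E} (hF : ContDiff ℝ 1 F) (hu : ContDiff ℝ 1 u)
    (hw : ContDiff ℝ 1 w) (hψ : ContDiff ℝ 1 ψ) (hψc : HasCompactSupport ψ) :
    weakLineDerivDefect μ v (fun x => F (u x) * w x) (fun x => F (u x) * fderiv ℝ w x v) ψ =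
      -∫ x, deriv F (u x) * (fderiv ℝ u x v * (w x * ψ x)) ∂μ := by
  have hFu := hF.continuous.comp hu.continuous
  have hint₁ : Integrable (fun x => F (u x) * w x * fderiv ℝ ψ x v) μ :=
    ((hFu.mul hw.continuous).mul (continuous_fderiv_apply_of_contDiff hψ v)
      ).integrable_of_hasCompactSupport (hψc.fderiv_apply ℝ v).mul_left
  have hint₂ : Integrable (fun x => F (u x) * fderiv ℝ w x v * ψ x) μ :=
    ((hFu.mul (continuous_fderiv_apply_of_contDiff hw v)).mul hψ.continuous
      ).integrable_of_hasCompactSupport hψc.mul_left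
  rw [weakLineDerivDefect, ← integral_add hint₁ hint₂,
    ← integral_comp_mul_fderiv_eq_neg_of_hasCompactSupport hF hu (hw.mul hψ) hψc.mul_left]
  refine integral_congr_ae (Eventually.of_forall fun x => ?_)
  simp only [fderiv_fun_mul (hw.differentiable one_ne_zero x) (hψ.differentiable one_ne_zero x),
    add_apply, smul_apply, smul_eq_mul]
  ring

variable [Fintype ι] {v : ι → E} {C : ℝ}

lemma norm_weakLineDerivDefect_comp_mul_le {U : ι → E → ℝ} (hF : ContDiff ℝ 1 F)
    (hmono : Monotone F) (hu : ContDiff ℝ 1 u) (hub : ∃ M, ∀ x, ‖u x‖ ≤ M)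
    (huU : ∀ i x, fderiv ℝ u x (v i) = U i x) (hU : ∀ i, ContDiff ℝ 1 (U i))
    (hUb : ∀ i, ∃ M, ∀ x, ‖U i x‖ ≤ M) (hUi : ∀ i, Integrable (U i) μ)
    (hU' : ∀ i, Integrable (fun x => fderiv ℝ (U i) x (v i)) μ)
    (hψ : ContDiff ℝ 1 ψ) (hψc : HasCompactSupport ψ) (hC : ∀ x, ‖ψ x‖ ≤ C) (i j : ι) :
    ‖weakLineDerivDefect μ (v j) (fun x => F (u x) * U i x)
        (fun x => F (u x) * fderiv ℝ (U i) x (v j)) ψ‖ ≤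
      C * -∑ k, ∫ x, F (u x) * fderiv ℝ (U k) x (v k) ∂μ := by
  have hsq : ∀ k, Integrable (fun x => U k x ^ 2) μ := fun k => by
    obtain ⟨M, hM⟩ := hUb k
    simpa only [sq] using
      (hUi k).bdd_mul (hU k).continuous.aestronglyMeasurable (Eventually.of_forall hM)
  have hF'sq : ∀ k, Integrable (fun x => deriv F (u x) * U k x ^ 2) μ := fun k =>
    integrable_comp_mul_of_bounded hF.continuous_deriv_one
      hu.continuous.aestronglyMeasurable hub (hsq k)
  have htrace : -∑ k, ∫ x, F (u x) * fderiv ℝ (U k) x (v k) ∂μ =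
      ∫ x, ∑ k, deriv F (u x) * U k x ^ 2 ∂μ := by
    rw [integral_finsetSum _ fun k _ => hF'sq k, ← Finset.sum_neg_distrib]
    refine Finset.sum_congr rfl fun k _ => ?_
    rw [integral_comp_mul_fderiv_eq_neg_sq hF hu hub (huU k)
      ((hU k).differentiable one_ne_zero) (hUi k) (hsq k) (hU' k), neg_neg]
  rw [weakLineDerivDefect_comp_mul hF hu (hU i) hψ hψc, norm_neg, htrace, ← integral_const_mul]
  refine norm_integral_le_of_norm_le ((integrable_finsetSum _ fun k _ => hF'sq k).const_mul C)
    (Eventually.of_forall fun x => ?_)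
  have hF'0 : 0 ≤ deriv F (u x) := hmono.deriv_nonneg
  calc ‖deriv F (u x) * (fderiv ℝ u x (v j) * (U i x * ψ x))‖
      = deriv F (u x) * |U i x * U j x| * ‖ψ x‖ := by
        simp only [huU, norm_mul, Real.norm_of_nonneg hF'0, abs_mul, Real.norm_eq_abs]
        ring
    _ ≤ deriv F (u x) * (∑ k, U k x ^ 2) * C := by
        gcongr
        exacts [abs_mul_le_sum_sq (fun k => U k x) i j, hC x]
    _ = C * ∑ k, deriv F (u x) * U k x ^ 2 := by rw [← Finset.mul_sum, mul_comm]

variable {φ : E → ℝ} {g : ι → E → ℝ} {h : ι → ι → E → ℝ}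

lemma norm_weakLineDerivDefect_comp_mul_le_of_hasWeakLineDeriv (hF : ContDiff ℝ 1 F)
    (hmono : Monotone F) {B : ℝ} (hB : ∀ s, ‖F s‖ ≤ B) (hφ : Integrable φ μ)
    (hg : ∀ i, Integrable (g i) μ) (hφg : ∀ i, HasWeakLineDeriv μ (v i) φ (g i))
    (hh : ∀ i j, Integrable (h i j) μ) (hgh : ∀ i j, HasWeakLineDeriv μ (v j) (g i) (h i j))
    (hψ : ContDiff ℝ 1 ψ) (hψc : HasCompactSupport ψ) (hC : ∀ x, ‖ψ x‖ ≤ C) (i j : ι) :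
    ‖weakLineDerivDefect μ (v j) (fun x => F (φ x) * g i x) (fun x => F (φ x) * h i j x) ψ‖ ≤
      C * -∑ k, ∫ x, F (φ x) * h k k x ∂μ := by
  have hint : ∀ {f r : E → ℝ}, Integrable f μ → Integrable r μ →
      Integrable (fun x => F (f x) * r x) μ := fun hf hr =>
    integrable_comp_mul hF.continuous hf.aestronglyMeasurable (fun _ => hB _) hr
  have hφint := fun n => integrable_mollify (shrinkingBump E n) hφ
  have hderiv : ∀ n i j x, fderiv ℝ (mollify μ (shrinkingBump E n) (g i)) x (v j) =
      mollify μ (shrinkingBump E n) (h i j) x := fun n i j =>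
    fderiv_mollify_of_hasWeakLineDeriv _ (hg i).locallyIntegrable (hgh i j)
  have hlim : ∀ {r : E → ℝ}, Integrable r μ → Tendsto (fun n => ∫ x,
      ‖F (mollify μ (shrinkingBump E n) φ x) * mollify μ (shrinkingBump E n) r x -
        F (φ x) * r x‖ ∂μ) atTop (𝓝 0) := fun hr =>
    tendsto_integral_norm_comp_mollify_mul_sub hF.continuous hB hφ.locallyIntegrable hr
  refine le_of_tendsto_of_tendsto' (tendsto_weakLineDerivDefect
    (fun n => hint (hφint n) (integrable_mollify _ (hg i))) (hint hφ (hg i)) (hlim (hg i))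
    (fun n => hint (hφint n) (integrable_mollify _ (hh i j))) (hint hφ (hh i j)) (hlim (hh i j))
    hψ hψc).norm ((tendsto_finsetSum _ fun k _ => tendsto_integral_of_tendsto_integral_norm_sub
      (fun n => hint (hφint n) (integrable_mollify _ (hh k k))) (hint hφ (hh k k))
      (hlim (hh k k))).neg.const_mul C) fun n => ?_
  simpa only [hderiv] using norm_weakLineDerivDefect_comp_mul_le (μ := μ) hF hmono
    (contDiff_mollify (shrinkingBump E n) hφ.locallyIntegrable) (exists_bound_mollify _ hφ)
    (fun k => fderiv_mollify_of_hasWeakLineDeriv _ hφ.locallyIntegrable (hφg k))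
    (fun k => contDiff_mollify _ (hg k).locallyIntegrable)
    (fun k => exists_bound_mollify _ (hg k)) (fun k => integrable_mollify _ (hg k))
    (fun k => by simpa only [hderiv] using integrable_mollify _ (hh k k)) hψ hψc hC i j

lemma norm_weakLineDerivDefect_indicator_le (hφ : Integrable φ μ)
    (hg : ∀ i, Integrable (g i) μ) (hφg : ∀ i, HasWeakLineDeriv μ (v i) φ (g i))
    (hh : ∀ i j, Integrable (h i j) μ) (hgh : ∀ i j, HasWeakLineDeriv μ (v j) (g i) (h i j))
    (hψ : ContDiff ℝ 1 ψ) (hψc : HasCompactSupport ψ) (hC : ∀ x, ‖ψ x‖ ≤ C) (i j : ι) :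
    ‖weakLineDerivDefect μ (v j) ({x | 0 < φ x}.indicator (g i))
        ({x | 0 < φ x}.indicator (h i j)) ψ‖ ≤
      C * -∫ x in {x | 0 < φ x}, ∑ k, h k k x ∂μ := by
  have hpos := nullMeasurableSet_pos hφ.aemeasurable
  have hint := fun {r : E → ℝ} (hr : Integrable r μ) =>
    integrable_smoothTransition_comp_mul hφ.aestronglyMeasurable hr
  have hlim := fun {r : E → ℝ} (hr : Integrable r μ) =>
    tendsto_integral_norm_smoothTransition_comp_mul_sub hφ.aestronglyMeasurable hr
  have htrace : ∀ k, Tendsto (fun n : ℕ => ∫ x, smoothTransition (n * φ x) * h k k x ∂μ) atTop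
      (𝓝 (∫ x in {x | 0 < φ x}, h k k x ∂μ)) := fun k => by
    rw [← integral_indicator₀ hpos]
    exact tendsto_integral_of_tendsto_integral_norm_sub (hint (hh k k))
      ((hh k k).indicator₀ hpos) (hlim (hh k k))
  rw [integral_finsetSum _ fun k _ => (hh k k).integrableOn]
  exact le_of_tendsto_of_tendsto' (tendsto_weakLineDerivDefect (hint (hg i))
    ((hg i).indicator₀ hpos) (hlim (hg i)) (hint (hh i j)) ((hh i j).indicator₀ hpos)
    (hlim (hh i j)) hψ hψc).norm ((tendsto_finsetSum _ fun k _ => htrace k).neg.const_mul C)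
    fun n => norm_weakLineDerivDefect_comp_mul_le_of_hasWeakLineDeriv
      (contDiff_smoothTransition_natCast_mul n)
      (smoothTransition.monotone.comp (monotone_id.const_mul n.cast_nonneg))
      (fun _ => norm_smoothTransition_le_one _) hφ hg hφg hh hgh hψ hψc hC i j

end KatoEstimate

theorem stmt17_general {E ι : Type*} [NormedAddCommGroup E] [NormedSpace ℝ E]
    [FiniteDimensional ℝ E] [MeasurableSpace E] [BorelSpace E] {μ : Measure E}
    [μ.IsAddHaarMeasure] [Fintype ι] {v : ι → E} {φ : E → ℝ} {g : ι → E → ℝ}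
    {h : ι → ι → E → ℝ} (hφ : Integrable φ μ) (hg : ∀ i, Integrable (g i) μ)
    (hφg : ∀ i, HasWeakLineDeriv μ (v i) φ (g i)) (hh : ∀ i j, Integrable (h i j) μ)
    (hgh : ∀ i j, HasWeakLineDeriv μ (v j) (g i) (h i j))
    (hnonneg : 0 ≤ ∫ x in {x | 0 < φ x}, ∑ i, h i i x ∂μ) :
    Integrable (fun x => max (φ x) 0) μ ∧ (∀ i, Integrable ({x | 0 < φ x}.indicator (g i)) μ) ∧
      (∀ i, HasWeakLineDeriv μ (v i) (fun x => max (φ x) 0) ({x | 0 < φ x}.indicator (g i))) ∧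
      (∀ i j, Integrable ({x | 0 < φ x}.indicator (h i j)) μ) ∧
      ∀ i j, HasWeakLineDeriv μ (v j) ({x | 0 < φ x}.indicator (g i))
        ({x | 0 < φ x}.indicator (h i j)) := by
  have hpos := nullMeasurableSet_pos hφ.aemeasurable
  refine ⟨hφ.pos_part, fun i => (hg i).indicator₀ hpos, fun i => (hφg i).posPart hφ (hg i),
    fun i j => (hh i j).indicator₀ hpos, fun i j => ?_⟩
  refine hasWeakLineDeriv_iff_defect_eq_zero.2 fun ψ hψ hψc => ?_
  obtain ⟨C, hC⟩ := hψc.exists_bound_of_continuous hψ.continuous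
  have hC0 : 0 ≤ C := (norm_nonneg _).trans (hC 0)
  refine norm_le_zero_iff.1 ((norm_weakLineDerivDefect_indicator_le hφ hg hφg hh hgh
    (hψ.of_le (mod_cast le_top)) hψc hC i j).trans ?_)
  exact mul_nonpos_of_nonneg_of_nonpos hC0 (neg_nonpos.2 hnonneg)

/-- Let `φ ∈ W^{2,1}(ℝ^N)` (with integrable weak first derivatives
`g i` and weak second derivatives `h i j`, so that `Δφ = Σᵢ h i i`) satisfy
`∫_{{φ > 0}} Δφ = 0`.  Then `φ⁺ = max(φ,0)` belongs to `W^{2,1}(ℝ^N)` and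
`Δφ⁺ = 1_{{φ>0}} Δφ` almost everywhere. -/
theorem stmt17 (N : ℕ) (hN : 1 ≤ N) (φ : Euc N → ℝ) (hφ : Integrable φ)
    (g : Fin N → Euc N → ℝ) (hg : ∀ i, Integrable (g i))
    (hgw : ∀ i, HasWeakPDeriv N φ i (g i))
    (h : Fin N → Fin N → Euc N → ℝ) (hh : ∀ i j, Integrable (h i j))
    (hhw : ∀ i j, HasWeakPDeriv N (g i) j (h i j))
    (hzero : (∫ x in {x | 0 < φ x}, ∑ i, h i i x) = 0) :
    Integrable (fun x => max (φ x) 0) ∧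
      ∃ G : Fin N → Euc N → ℝ, (∀ i, Integrable (G i)) ∧
        (∀ i, HasWeakPDeriv N (fun x => max (φ x) 0) i (G i)) ∧
        ∃ H : Fin N → Fin N → Euc N → ℝ, (∀ i j, Integrable (H i j)) ∧
          (∀ i j, HasWeakPDeriv N (G i) j (H i j)) ∧
          (fun x => ∑ i, H i i x) =ᵐ[volume]
            (Set.indicator {x | 0 < φ x} (fun x => ∑ i, h i i x)) := by
  obtain ⟨hpos, hG, hφG, hH, hGH⟩ := stmt17_general hφ hg hgw hh hhw hzero.ge
  exact ⟨hpos, _, hG, hφG, _, hH, hGH,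
    Eventually.of_forall fun x => by by_cases hx : 0 < φ x <;> simp [hx]⟩
end
end

section
/- Let 1 < q < 2 and let u : ℝ × (0,∞) → ℝ be a smooth, strictly positive solution of u_t − u_{xx} + (1/q)(u^q)_x = 0 on ℝ × (0,∞). Then the entropy inequality ∂_x(u(x,t)^{q−1}) ≤ 1/t holds for all x ∈ ℝ and t > 0. Consequently, if in addition u(·,t) ∈ L¹(ℝ) with ∫_ℝ u(x,t) dx = M for all t > 0, then 0 < u(x,t) ≤ (qM/((q−1)t))^{1/q} for all x ∈ ℝ and t > 0. -/
open MeasureTheory Real Filter Topology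

noncomputable section

/-!
The pressure `V = u^(q-1)` solves `V_t = V_xx + a V_x² / V - V V_x`, where
`a = (2 - q) / (q - 1) > 0`, so `W = V_x` solves
`W_t = W_xx + 2 a W W_x / V - V W_x - W² - a W³ / V²`, whose damping `-W²` makes `1 / t` a
supersolution. As nothing is known about `u` for large `|x|`, the comparison is local: `W` is
compared with `1 / (t - δ) + (1 + V) k²` on `(δ, T] × (x₀ - R, x₀ + R)`, where `k ≥ e` blows up
at the endpoints of the interval. At a positive maximum of the difference the damping beats every
term containing a derivative of `k`, provided `R` is large in terms of `e`. Letting `e, δ → 0` gives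
`W ≤ 1 / t`.

For the decay, `V_x ≤ 1 / t` keeps `V` above the line of slope `1 / t` through `V(x, t)` to the
left of `x`; raised to the power `1 / (q - 1)` and integrated down to its zero, this line gives a
lower bound for the mass of `u` in terms of `u(x, t)`.
-/

theorem nonpos_of_isLocalMax_of_hasDerivAt {f f' : ℝ → ℝ} {f'' x : ℝ} (hmax : IsLocalMax f x)
    (hf : ∀ᶠ z in 𝓝 x, HasDerivAt f (f' z) z) (hf' : HasDerivAt f' f'' x) : f'' ≤ 0 := by
  by_contra! hpos
  have hderiv : deriv f =ᶠ[𝓝 x] f' := hf.mono fun z hz => hz.deriv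
  have hderiv2 : deriv (deriv f) x = f'' := by rw [hderiv.deriv_eq, hf'.deriv]
  have hmin : IsLocalMin f x := isLocalMin_of_deriv_deriv_pos (hderiv2.symm ▸ hpos)
    hmax.deriv_eq_zero hf.self_of_nhds.continuousAt
  have hconst : f =ᶠ[𝓝 x] fun _ => f x := by
    filter_upwards [hmax, hmin] with z hle hge using le_antisymm hle hge
  have hzero : deriv (deriv f) x = 0 := by simpa using hconst.deriv.deriv_eq
  linarith

theorem nonneg_of_isLocalMaxOn_Iic_of_hasDerivAt {f : ℝ → ℝ} {f' t : ℝ}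
    (hmax : IsLocalMaxOn f (Set.Iic t) t) (hf : HasDerivAt f f' t) : 0 ≤ f' := by
  have hcone : (-1 : ℝ) ∈ posTangentConeAt (Set.Iic t) t :=
    mem_posTangentConeAt_of_segment_subset <|
      (convex_Iic t).segment_subset Set.self_mem_Iic (by simp)
  simpa using hmax.hasFDerivWithinAt_nonpos hf.hasFDerivAt.hasFDerivWithinAt hcone

theorem exists_parabolic_max {X : Type*} [TopologicalSpace X] {F : ℝ × X → ℝ} {δ T : ℝ}
    {I : Set X} {K : Set (ℝ × X)} (hI : IsOpen I) (hK : IsCompact K)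
    (hKI : K ⊆ Set.Ioc δ T ×ˢ I) (hF : ContinuousOn F K)
    (hpos : ∀ p ∈ Set.Ioc δ T ×ˢ I, 0 < F p → p ∈ K)
    (hex : ∃ p ∈ Set.Ioc δ T ×ˢ I, 0 < F p) :
    ∃ t x, (t, x) ∈ K ∧ 0 < F (t, x) ∧ IsLocalMax (fun z => F (t, z)) x ∧
      IsLocalMaxOn (fun τ => F (τ, x)) (Set.Iic t) t := by
  obtain ⟨p₀, hp₀, hFp₀⟩ := hex
  obtain ⟨⟨t, x⟩, hpK, hmax⟩ := hK.exists_isMaxOn ⟨p₀, hpos p₀ hp₀ hFp₀⟩ hF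
  have hFp : 0 < F (t, x) := hFp₀.trans_le (hmax (hpos p₀ hp₀ hFp₀))
  have hle : ∀ p ∈ Set.Ioc δ T ×ˢ I, F p ≤ F (t, x) := fun p hp =>
    (le_or_gt (F p) 0).elim (fun h => h.trans hFp.le) fun h => hmax (hpos p hp h)
  obtain ⟨⟨hδt, htT⟩, hx⟩ := hKI hpK
  refine ⟨t, x, hpK, hFp, ?_, ?_⟩
  · filter_upwards [hI.mem_nhds hx] with z hz using hle (t, z) ⟨⟨hδt, htT⟩, hz⟩
  · filter_upwards [nhdsWithin_le_nhds (eventually_gt_nhds hδt), self_mem_nhdsWithin]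
      with τ hδτ hτt using hle (τ, x) ⟨⟨hδτ, hτt.trans htT⟩, hx⟩

theorem fderiv_fderiv_apply_comm {E : Type*} [NormedAddCommGroup E] [NormedSpace ℝ E]
    {F : E → ℝ} {p : E} (hF : ContDiffAt ℝ 2 F p) (v w : E) :
    fderiv ℝ (fun y => fderiv ℝ F y v) p w = fderiv ℝ (fun y => fderiv ℝ F y w) p v := by
  have hd : DifferentiableAt ℝ (fderiv ℝ F) p :=
    (hF.fderiv_right (m := 1) (by norm_num)).differentiableAt one_ne_zero
  have hsymm : fderiv ℝ (fderiv ℝ F) p w v = fderiv ℝ (fderiv ℝ F) p v w :=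
    hF.isSymmSndFDerivAt (by simp) w v
  simpa [fderiv_clm_apply hd (differentiableAt_const _)] using hsymm

theorem fderiv_rpow_const_apply {E : Type*} [NormedAddCommGroup E] [NormedSpace ℝ E] {F : E → ℝ}
    {p : E} (r : ℝ) (hF : DifferentiableAt ℝ F p) (hpos : 0 < F p) (v : E) :
    fderiv ℝ (fun y => F y ^ r) p v = r * F p ^ r * fderiv ℝ F p v / F p := by
  rw [(hF.hasFDerivAt.rpow_const (Or.inl hpos.ne')).fderiv, rpow_sub_one hpos.ne', smul_apply,
    smul_eq_mul]
  ring

/-- The partial derivative `∂F/∂t` of a function `F` of time and space, the pair `(t, x)` being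
the argument of `F`. -/
def timeDeriv (F : ℝ × ℝ → ℝ) (p : ℝ × ℝ) : ℝ := fderiv ℝ F p (1, 0)

/-- The partial derivative `∂F/∂x` of a function `F` of time and space, the pair `(t, x)` being
the argument of `F`. -/
def spaceDeriv (F : ℝ × ℝ → ℝ) (p : ℝ × ℝ) : ℝ := fderiv ℝ F p (0, 1)

local notation "∂ₜ" => timeDeriv
local notation "∂ₓ" => spaceDeriv

section PartialDerivatives

variable {F : ℝ × ℝ → ℝ} {Ω : Set (ℝ × ℝ)} {t x : ℝ}

theorem hasDerivAt_timeDeriv (hF : DifferentiableAt ℝ F (t, x)) :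
    HasDerivAt (fun τ => F (τ, x)) (∂ₜ F (t, x)) t :=
  hF.hasFDerivAt.comp_hasDerivAt t ((hasDerivAt_id t).prodMk (hasDerivAt_const t x))

theorem hasDerivAt_spaceDeriv (hF : DifferentiableAt ℝ F (t, x)) :
    HasDerivAt (fun z => F (t, z)) (∂ₓ F (t, x)) x :=
  hF.hasFDerivAt.comp_hasDerivAt x ((hasDerivAt_const x t).prodMk (hasDerivAt_id x))

theorem contDiffAt_timeDeriv {m n : WithTop ℕ∞} {p : ℝ × ℝ} (hF : ContDiffAt ℝ n F p)
    (hmn : m + 1 ≤ n) : ContDiffAt ℝ m (∂ₜ F) p :=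
  (hF.fderiv_right hmn).clm_apply contDiffAt_const

theorem contDiffAt_spaceDeriv {m n : WithTop ℕ∞} {p : ℝ × ℝ} (hF : ContDiffAt ℝ n F p)
    (hmn : m + 1 ≤ n) : ContDiffAt ℝ m (∂ₓ F) p :=
  (hF.fderiv_right hmn).clm_apply contDiffAt_const

theorem timeDeriv_spaceDeriv_comm {p : ℝ × ℝ} (hF : ContDiffAt ℝ 2 F p) :
    ∂ₜ (∂ₓ F) p = ∂ₓ (∂ₜ F) p :=
  fderiv_fderiv_apply_comm hF (0, 1) (1, 0)

theorem eventually_mem_timeSlice (hΩ : IsOpen Ω) (hp : (t, x) ∈ Ω) :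
    ∀ᶠ z in 𝓝 x, (t, z) ∈ Ω :=
  (Continuous.prodMk_right t).continuousAt.eventually (hΩ.mem_nhds hp)

theorem spaceDeriv_eq_of_hasDerivAt {G : ℝ × ℝ → ℝ} {c : ℝ} (hΩ : IsOpen Ω)
    (hFG : Set.EqOn F G Ω) (hp : (t, x) ∈ Ω) (hF : DifferentiableAt ℝ F (t, x))
    (hG : HasDerivAt (fun z => G (t, z)) c x) : ∂ₓ F (t, x) = c := by
  have hslice : (fun z => F (t, z)) =ᶠ[𝓝 x] fun z => G (t, z) :=
    (eventually_mem_timeSlice hΩ hp).mono fun z hz => hFG hz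
  exact (hasDerivAt_spaceDeriv hF).unique (hG.congr_of_eventuallyEq hslice)

end PartialDerivatives

/-- `V` is a positive solution, on the open set `Ω` of space-time, of the equation
`V_t = V_xx + a V_x² / V - V V_x`. For a solution `u` of `u_t - u_xx + (1/q) (u^q)_x = 0` this is
the equation of the pressure `V = u^(q-1)`, with `a = (2 - q) / (q - 1)`. -/
structure IsPressureSolution (a : ℝ) (V : ℝ × ℝ → ℝ) (Ω : Set (ℝ × ℝ)) : Prop where
  isOpen : IsOpen Ω
  contDiffOn : ContDiffOn ℝ 3 V Ω
  pos : ∀ p ∈ Ω, 0 < V p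
  timeDeriv_eq : Set.EqOn (∂ₜ V) (fun p => ∂ₓ (∂ₓ V) p + a * ∂ₓ V p ^ 2 / V p - V p * ∂ₓ V p) Ω

theorem timeDeriv_eq_of_divergence_form {q : ℝ} {U : ℝ × ℝ → ℝ} {Ω : Set (ℝ × ℝ)} {t x : ℝ}
    (hq : q ≠ 0) (hΩ : IsOpen Ω) (hU : ContDiffOn ℝ 2 U Ω) (hp : (t, x) ∈ Ω) (hpos : 0 < U (t, x))
    (hpde : HasDerivAt (fun τ => U (τ, x)) (deriv (deriv fun z => U (t, z)) x
      - (1 / q) * deriv (fun z => U (t, z) ^ q) x) t) :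
    ∂ₜ U (t, x) = ∂ₓ (∂ₓ U) (t, x) - U (t, x) ^ (q - 1) * ∂ₓ U (t, x) := by
  have hcd : ∀ p ∈ Ω, ContDiffAt ℝ 2 U p := fun p hp => hU.contDiffAt (hΩ.mem_nhds hp)
  have hdiff : ∀ p ∈ Ω, DifferentiableAt ℝ U p := fun p hp =>
    (hcd p hp).differentiableAt two_ne_zero
  have hUx : deriv (fun z => U (t, z)) =ᶠ[𝓝 x] fun z => ∂ₓ U (t, z) :=
    (eventually_mem_timeSlice hΩ hp).mono fun z hz => (hasDerivAt_spaceDeriv (hdiff _ hz)).deriv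
  have hUxx : deriv (deriv fun z => U (t, z)) x = ∂ₓ (∂ₓ U) (t, x) := by
    have hUx' := (contDiffAt_spaceDeriv (m := 1) (hcd _ hp) (by norm_num)).differentiableAt
      one_ne_zero
    rw [hUx.deriv_eq, (hasDerivAt_spaceDeriv hUx').deriv]
  have hflux : deriv (fun z => U (t, z) ^ q) x = ∂ₓ U (t, x) * q * U (t, x) ^ (q - 1) :=
    ((hasDerivAt_spaceDeriv (hdiff _ hp)).rpow_const (Or.inl hpos.ne')).deriv
  rw [(hasDerivAt_timeDeriv (hdiff _ hp)).unique hpde, hUxx, hflux]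
  field_simp

theorem isPressureSolution_rpow {q : ℝ} {U : ℝ × ℝ → ℝ} {Ω : Set (ℝ × ℝ)} (hq : q ≠ 1)
    (hΩ : IsOpen Ω) (hU : ContDiffOn ℝ 3 U Ω) (hpos : ∀ p ∈ Ω, 0 < U p)
    (heq : ∀ p ∈ Ω, ∂ₜ U p = ∂ₓ (∂ₓ U) p - U p ^ (q - 1) * ∂ₓ U p) :
    IsPressureSolution ((2 - q) / (q - 1)) (fun p => U p ^ (q - 1)) Ω := by
  set V : ℝ × ℝ → ℝ := fun p => U p ^ (q - 1)
  have hV : ContDiffOn ℝ 3 V Ω := hU.rpow_const_of_ne fun p hp => (hpos p hp).ne'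
  have hVpos : ∀ p ∈ Ω, 0 < V p := fun p hp => rpow_pos_of_pos (hpos p hp) _
  have hUcd : ∀ p ∈ Ω, ContDiffAt ℝ 3 U p := fun p hp => hU.contDiffAt (hΩ.mem_nhds hp)
  have hVcd : ∀ p ∈ Ω, ContDiffAt ℝ 3 V p := fun p hp => hV.contDiffAt (hΩ.mem_nhds hp)
  have hUd : ∀ p ∈ Ω, DifferentiableAt ℝ U p := fun p hp =>
    (hUcd p hp).differentiableAt three_ne_zero
  have hVx : Set.EqOn (∂ₓ V) (fun p => (q - 1) * V p * ∂ₓ U p / U p) Ω := fun p hp =>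
    fderiv_rpow_const_apply _ (hUd p hp) (hpos p hp) _
  refine ⟨hΩ, hV, hVpos, fun ⟨t, x⟩ hp => ?_⟩
  have hVt : ∂ₜ V (t, x) = (q - 1) * V (t, x) * ∂ₜ U (t, x) / U (t, x) :=
    fderiv_rpow_const_apply _ (hUd _ hp) (hpos _ hp) _
  have hd : ∀ {F : ℝ × ℝ → ℝ}, ContDiffAt ℝ 3 F (t, x) → DifferentiableAt ℝ (∂ₓ F) (t, x) :=
    fun hF => (contDiffAt_spaceDeriv (m := 2) hF (by norm_num)).differentiableAt two_ne_zero
  have hVxx := spaceDeriv_eq_of_hasDerivAt hΩ hVx hp (hd (hVcd _ hp)) <|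
    (((hasDerivAt_spaceDeriv ((hVcd _ hp).differentiableAt three_ne_zero)).const_mul (q - 1)).mul
      (hasDerivAt_spaceDeriv (hd (hUcd _ hp)))).div (hasDerivAt_spaceDeriv (hUd _ hp))
      (hpos _ hp).ne'
  have hq' : q - 1 ≠ 0 := sub_ne_zero.2 hq
  have hU0 := (hpos _ hp).ne'
  have hV0 := (hVpos _ hp).ne'
  have hUq : U (t, x) ^ (q - 1) = V (t, x) := rfl
  simp only [hVt, heq _ hp, hUq, hVxx, Pi.mul_apply, hVx hp]
  field_simp
  ring

namespace IsPressureSolution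

variable {a : ℝ} {V : ℝ × ℝ → ℝ} {Ω : Set (ℝ × ℝ)}

section Regularity

variable {p : ℝ × ℝ}

theorem contDiffAt (hV : IsPressureSolution a V Ω) (hp : p ∈ Ω) : ContDiffAt ℝ 3 V p :=
  hV.contDiffOn.contDiffAt (hV.isOpen.mem_nhds hp)

theorem differentiableAt (hV : IsPressureSolution a V Ω) (hp : p ∈ Ω) :
    DifferentiableAt ℝ V p :=
  (hV.contDiffAt hp).differentiableAt three_ne_zero

theorem contDiffAt_spaceDeriv (hV : IsPressureSolution a V Ω) (hp : p ∈ Ω) :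
    ContDiffAt ℝ 2 (∂ₓ V) p :=
  _root_.contDiffAt_spaceDeriv (hV.contDiffAt hp) (by norm_num)

theorem differentiableAt_spaceDeriv (hV : IsPressureSolution a V Ω) (hp : p ∈ Ω) :
    DifferentiableAt ℝ (∂ₓ V) p :=
  (hV.contDiffAt_spaceDeriv hp).differentiableAt two_ne_zero

theorem differentiableAt_spaceDeriv_spaceDeriv (hV : IsPressureSolution a V Ω) (hp : p ∈ Ω) :
    DifferentiableAt ℝ (∂ₓ (∂ₓ V)) p :=
  (_root_.contDiffAt_spaceDeriv (m := 1) (hV.contDiffAt_spaceDeriv hp)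
    (by norm_num)).differentiableAt one_ne_zero

end Regularity

variable {t x : ℝ}

theorem timeDeriv_spaceDeriv_eq (hV : IsPressureSolution a V Ω) (hp : (t, x) ∈ Ω) :
    ∂ₜ (∂ₓ V) (t, x) = ∂ₓ (∂ₓ (∂ₓ V)) (t, x)
      + 2 * a * ∂ₓ V (t, x) * ∂ₓ (∂ₓ V) (t, x) / V (t, x)
      - a * ∂ₓ V (t, x) ^ 3 / V (t, x) ^ 2 - ∂ₓ V (t, x) ^ 2
      - V (t, x) * ∂ₓ (∂ₓ V) (t, x) := by
  have hVt : DifferentiableAt ℝ (∂ₜ V) (t, x) :=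
    (contDiffAt_timeDeriv (m := 2) (hV.contDiffAt hp) (by norm_num)).differentiableAt two_ne_zero
  have hVx := hasDerivAt_spaceDeriv (hV.differentiableAt hp)
  have hVxx := hasDerivAt_spaceDeriv (hV.differentiableAt_spaceDeriv hp)
  have hVxxx := hasDerivAt_spaceDeriv (hV.differentiableAt_spaceDeriv_spaceDeriv hp)
  have hV0 := (hV.pos _ hp).ne'
  rw [timeDeriv_spaceDeriv_comm ((hV.contDiffAt hp).of_le (by norm_num)),
    spaceDeriv_eq_of_hasDerivAt hV.isOpen hV.timeDeriv_eq hp hVt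
      ((hVxxx.add (((hVxx.pow 2).const_mul a).div hVx hV0)).sub (hVx.mul hVxx))]
  simp only [Nat.cast_ofNat, Nat.add_one_sub_one, pow_one, Pi.pow_apply]
  field_simp
  ring

theorem le_of_parabolic_max {g h h' : ℝ → ℝ} {g' h'' : ℝ} (hV : IsPressureSolution a V Ω)
    (hp : (t, x) ∈ Ω) (hg : HasDerivAt g g' t) (hh : ∀ᶠ z in 𝓝 x, HasDerivAt h (h' z) z)
    (hh' : HasDerivAt h' h'' x)
    (hmax_x : IsLocalMax (fun z => ∂ₓ V (t, z) - (g t + (1 + V (t, z)) * h z)) x)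
    (hmax_t : IsLocalMaxOn (fun τ => ∂ₓ V (τ, x) - (g τ + (1 + V (τ, x)) * h x)) (Set.Iic t) t) :
    g' + ∂ₓ V (t, x) ^ 2 + a * ∂ₓ V (t, x) ^ 3 / V (t, x) ^ 2 ≤
      a * ∂ₓ V (t, x) ^ 2 * h x / V (t, x) + 2 * ∂ₓ V (t, x) * h' x + (1 + V (t, x)) * h''
        + (2 * a * ∂ₓ V (t, x) / V (t, x) - V (t, x)) * (1 + V (t, x)) * h' x := by
  have hderiv : ∀ᶠ z in 𝓝 x,
      HasDerivAt (fun z => ∂ₓ V (t, z) - (g t + (1 + V (t, z)) * h z))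
        (∂ₓ (∂ₓ V) (t, z) - (∂ₓ V (t, z) * h z + (1 + V (t, z)) * h' z)) z := by
    filter_upwards [hh, eventually_mem_timeSlice hV.isOpen hp] with z hz hzΩ
    exact (hasDerivAt_spaceDeriv (hV.differentiableAt_spaceDeriv hzΩ)).sub
      ((((hasDerivAt_spaceDeriv (hV.differentiableAt hzΩ)).const_add 1).mul hz).const_add (g t))
  have hVx := hasDerivAt_spaceDeriv (hV.differentiableAt hp)
  have hVxx := hasDerivAt_spaceDeriv (hV.differentiableAt_spaceDeriv hp)
  have hVxxx := hasDerivAt_spaceDeriv (hV.differentiableAt_spaceDeriv_spaceDeriv hp)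
  have hfirst : ∂ₓ (∂ₓ V) (t, x) = ∂ₓ V (t, x) * h x + (1 + V (t, x)) * h' x := by
    linarith [hmax_x.hasDerivAt_eq_zero hderiv.self_of_nhds]
  have hsecond := nonpos_of_isLocalMax_of_hasDerivAt hmax_x hderiv <|
    hVxxx.sub ((hVxx.mul hh.self_of_nhds).add ((hVx.const_add 1).mul hh'))
  have htime := nonneg_of_isLocalMaxOn_Iic_of_hasDerivAt hmax_t <|
    (hasDerivAt_timeDeriv (hV.differentiableAt_spaceDeriv hp)).sub
      (hg.add (((hasDerivAt_timeDeriv (hV.differentiableAt hp)).const_add 1).mul_const (h x)))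
  rw [hV.timeDeriv_spaceDeriv_eq hp, hV.timeDeriv_eq hp] at htime
  simp only [hfirst] at hsecond htime
  have hV0 := (hV.pos _ hp).ne'
  refine sub_nonneg.1 ((sub_nonneg.2 (hsecond.trans htime)).trans_eq ?_)
  field_simp
  ring

end IsPressureSolution

/- Here `w`, `v`, `k` and `s` stand for the values of `∂V/∂x`, `V`, the spatial profile and
`1 / (t - δ)`, and `h'`, `h''` for the derivatives of `k²`. The gain
`(1 + v) w k² + a w² k² / v²` is what the damping `w² + a w³ / v²` leaves over once the terms
without derivatives of `k²` are paid for. -/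
section BarrierInequalities

variable {a e k s v w : ℝ}

theorem sq_add_gain_le (ha : 0 ≤ a) (hv : 0 < v) (hs : 0 ≤ s) (hw : s + (1 + v) * k ^ 2 ≤ w) :
    s ^ 2 + a * w ^ 2 * k ^ 2 / v + ((1 + v) * w * k ^ 2 + a * w ^ 2 * k ^ 2 / v ^ 2) ≤
      w ^ 2 + a * w ^ 3 / v ^ 2 := by
  have hk : 0 ≤ (1 + v) * k ^ 2 := by positivity
  have hquadratic : s ^ 2 + (1 + v) * w * k ^ 2 ≤ w ^ 2 := by nlinarith
  have hcubic : a * w ^ 2 * k ^ 2 / v + a * w ^ 2 * k ^ 2 / v ^ 2 ≤ a * w ^ 3 / v ^ 2 :=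
    calc a * w ^ 2 * k ^ 2 / v + a * w ^ 2 * k ^ 2 / v ^ 2
        = a * w ^ 2 / v ^ 2 * ((1 + v) * k ^ 2) := by field_simp; ring
      _ ≤ a * w ^ 2 / v ^ 2 * w := by gcongr; linarith
      _ = a * w ^ 3 / v ^ 2 := by ring
  linarith

theorem two_mul_cross_le (ha : 0 < a) (hv : 0 < v) (hk : 0 ≤ k) (hw : (1 + v) * k ^ 2 ≤ w) :
    2 * (1 + a * (1 + v) / v) * w * k ^ 3 ≤
      (1 + a) ^ 2 / a * ((1 + v) * w * k ^ 2 + a * w ^ 2 * k ^ 2 / v ^ 2) := by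
  have hw0 : 0 ≤ w := le_trans (by positivity) hw
  have hcoeff : 1 + a * (1 + v) / v ≤ (1 + a) * (1 + v) / v := by
    rw [le_div_iff₀ hv, add_mul, div_mul_cancel₀ _ hv.ne']
    linarith
  have hyoung : 2 * (k / v) ≤ (1 + a) / a * (1 + a * (k / v) ^ 2) := by
    rw [div_mul_eq_mul_div, le_div_iff₀ ha]
    nlinarith [mul_nonneg ha.le (sq_nonneg (1 - k / v)), sq_nonneg (a * (k / v))]
  calc 2 * (1 + a * (1 + v) / v) * w * k ^ 3
      ≤ 2 * ((1 + a) * (1 + v) / v) * w * k ^ 3 := by gcongr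
    _ = (1 + a) * ((1 + v) * w * k ^ 2) * (2 * (k / v)) := by ring
    _ ≤ (1 + a) * ((1 + v) * w * k ^ 2) * ((1 + a) / a * (1 + a * (k / v) ^ 2)) := by gcongr
    _ = (1 + a) ^ 2 / a *
          ((1 + v) * w * k ^ 2 + a * w * k ^ 2 / v ^ 2 * ((1 + v) * k ^ 2)) := by ring
    _ ≤ (1 + a) ^ 2 / a * ((1 + v) * w * k ^ 2 + a * w * k ^ 2 / v ^ 2 * w) := by gcongr
    _ = (1 + a) ^ 2 / a * ((1 + v) * w * k ^ 2 + a * w ^ 2 * k ^ 2 / v ^ 2) := by ring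

theorem loss_le_gain (ha : 0 < a) (hv : 0 < v) (he : 0 < e) (hk : e ≤ k)
    (hw : (1 + v) * k ^ 2 ≤ w) :
    2 * (1 + a * (1 + v) / v) * w * k ^ 3 + (1 + v) * k ^ 4 + v * (1 + v) * k ^ 3 ≤
      ((1 + a) ^ 2 / a + 1 + 1 / e) * ((1 + v) * w * k ^ 2 + a * w ^ 2 * k ^ 2 / v ^ 2) := by
  have hk0 : 0 < k := he.trans_le hk
  have hw0 : 0 < w := lt_of_lt_of_le (by positivity) hw
  have hv1 : 1 ≤ 1 + v := by linarith
  have hcross := two_mul_cross_le ha hv hk0.le hw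
  set G := (1 + v) * w * k ^ 2 + a * w ^ 2 * k ^ 2 / v ^ 2
  have hG : (1 + v) * w * k ^ 2 ≤ G := le_add_of_nonneg_right (by positivity)
  have hquartic : (1 + v) * k ^ 4 ≤ G :=
    calc (1 + v) * k ^ 4 = 1 * k ^ 2 * ((1 + v) * k ^ 2) := by ring
      _ ≤ (1 + v) * k ^ 2 * w := by gcongr
      _ ≤ G := by linarith
  have hcubic : v * (1 + v) * k ^ 3 ≤ 1 / e * G := by
    rw [one_div, ← div_eq_inv_mul, le_div_iff₀ he]
    calc v * (1 + v) * k ^ 3 * e ≤ v * (1 + v) * k ^ 3 * k := by gcongr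
      _ = v * k ^ 2 * ((1 + v) * k ^ 2) := by ring
      _ ≤ (1 + v) * k ^ 2 * w := by gcongr; linarith
      _ ≤ G := by linarith
  linarith

theorem barrier_terms_le {κ h' h'' : ℝ} (ha : 0 ≤ a) (hv : 0 < v) (hw : 0 ≤ w)
    (hh' : |h'| ≤ κ * k ^ 3) (hh'' : h'' ≤ κ * k ^ 4) :
    2 * w * h' + (1 + v) * h'' + (2 * a * w / v - v) * (1 + v) * h' ≤
      κ * (2 * (1 + a * (1 + v) / v) * w * k ^ 3 + (1 + v) * k ^ 4 + v * (1 + v) * k ^ 3) := by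
  obtain ⟨hneg, hle⟩ := abs_le.1 hh'
  calc 2 * w * h' + (1 + v) * h'' + (2 * a * w / v - v) * (1 + v) * h'
      = 2 * (1 + a * (1 + v) / v) * w * h' + (1 + v) * h'' + v * (1 + v) * (-h') := by ring
    _ ≤ 2 * (1 + a * (1 + v) / v) * w * (κ * k ^ 3) + (1 + v) * (κ * k ^ 4)
          + v * (1 + v) * (κ * k ^ 3) := by gcongr; linarith
    _ = _ := by ring

theorem barrier_supersolution {κ h' h'' : ℝ} (ha : 0 < a) (hv : 0 < v) (hs : 0 ≤ s) (he : 0 < e)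
    (hk : e ≤ k) (hw : s + (1 + v) * k ^ 2 ≤ w) (hκ : 0 ≤ κ)
    (hκ' : κ * ((1 + a) ^ 2 / a + 1 + 1 / e) < 1) (hh' : |h'| ≤ κ * k ^ 3)
    (hh'' : h'' ≤ κ * k ^ 4) :
    a * w ^ 2 * k ^ 2 / v + 2 * w * h' + (1 + v) * h'' + (2 * a * w / v - v) * (1 + v) * h' <
      -s ^ 2 + w ^ 2 + a * w ^ 3 / v ^ 2 := by
  have hk0 : 0 < k := he.trans_le hk
  have hw' : (1 + v) * k ^ 2 ≤ w := by linarith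
  have hw0 : 0 < w := lt_of_lt_of_le (by positivity) hw'
  have hgain := sq_add_gain_le ha.le hv hs hw
  have hterms := barrier_terms_le ha.le hv hw0.le hh' hh''
  have hloss := mul_le_mul_of_nonneg_left (loss_le_gain ha hv he hk hw') hκ
  have hG : 0 < (1 + v) * w * k ^ 2 + a * w ^ 2 * k ^ 2 / v ^ 2 := by positivity
  have hsmall := mul_lt_of_lt_one_left hG hκ'
  rw [← mul_assoc] at hloss
  linarith

end BarrierInequalities

/-- The function on `(x₀ - R, x₀ + R)` with minimum `e` at `x₀` whose square is the spatial part
of the barrier; it blows up at `x₀ ± R`. -/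
def barrierProfile (e R x₀ z : ℝ) : ℝ := e * R ^ 2 / (R ^ 2 - (z - x₀) ^ 2)

section BarrierProfile

variable {e R x₀ z : ℝ}

theorem sq_sub_sq_pos_of_mem_ball (hz : z ∈ Metric.ball x₀ R) : 0 < R ^ 2 - (z - x₀) ^ 2 :=
  sub_pos.2 (sq_lt_sq' (neg_lt_of_abs_lt hz) (lt_of_abs_lt hz))

theorem le_barrierProfile (he : 0 ≤ e) (hz : z ∈ Metric.ball x₀ R) :
    e ≤ barrierProfile e R x₀ z := by
  rw [barrierProfile, le_div_iff₀ (sq_sub_sq_pos_of_mem_ball hz)]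
  gcongr
  exact sub_le_self _ (sq_nonneg _)

theorem hasDerivAt_barrierProfile (he : e ≠ 0) (hR : R ≠ 0) (hz : z ∈ Metric.ball x₀ R) :
    HasDerivAt (barrierProfile e R x₀)
      (2 * (z - x₀) / (e * R ^ 2) * barrierProfile e R x₀ z ^ 2) z := by
  have hρ := (sq_sub_sq_pos_of_mem_ball hz).ne'
  have hden := (((hasDerivAt_id z).sub_const x₀).pow 2).const_sub (R ^ 2)
  refine ((hasDerivAt_const z (e * R ^ 2)).div hden hρ).congr_deriv ?_
  simp only [barrierProfile, id_eq, Pi.pow_apply, zero_mul, Nat.cast_ofNat, Nat.add_one_sub_one,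
    pow_one, mul_one, mul_neg, sub_neg_eq_add, zero_add]
  field_simp

theorem hasDerivAt_barrierProfile_sq (he : e ≠ 0) (hR : R ≠ 0) (hz : z ∈ Metric.ball x₀ R) :
    HasDerivAt (fun y => barrierProfile e R x₀ y ^ 2)
      (4 * (z - x₀) / (e * R ^ 2) * barrierProfile e R x₀ z ^ 3) z := by
  refine ((hasDerivAt_barrierProfile he hR hz).pow 2).congr_deriv ?_
  push_cast
  ring

theorem hasDerivAt_deriv_barrierProfile_sq (he : e ≠ 0) (hR : R ≠ 0)
    (hz : z ∈ Metric.ball x₀ R) :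
    HasDerivAt (fun y => 4 * (y - x₀) / (e * R ^ 2) * barrierProfile e R x₀ y ^ 3)
      (4 / (e * R ^ 2) * barrierProfile e R x₀ z ^ 3
        + 24 * (z - x₀) ^ 2 / (e * R ^ 2) ^ 2 * barrierProfile e R x₀ z ^ 4) z := by
  have hlin := (((hasDerivAt_id z).sub_const x₀).const_mul 4).div_const (e * R ^ 2)
  refine (hlin.mul ((hasDerivAt_barrierProfile he hR hz).pow 3)).congr_deriv ?_
  simp only [mul_one, Pi.pow_apply, id_eq, Nat.cast_ofNat, Nat.add_one_sub_one, add_right_inj]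
  ring

theorem abs_deriv_barrierProfile_sq_le (he : 0 < e) (hR : 0 < R) (hz : z ∈ Metric.ball x₀ R) :
    |4 * (z - x₀) / (e * R ^ 2) * barrierProfile e R x₀ z ^ 3| ≤
      28 / (e * R) * barrierProfile e R x₀ z ^ 3 := by
  have hk : 0 < barrierProfile e R x₀ z := he.trans_le (le_barrierProfile he.le hz)
  have hzR : |z - x₀| ≤ R := hz.le
  rw [abs_mul, abs_div, abs_mul, abs_of_pos (pow_pos hk 3),
    abs_of_pos (by positivity : 0 < e * R ^ 2), abs_of_pos (four_pos (α := ℝ))]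
  gcongr ?_ * _
  calc 4 * |z - x₀| / (e * R ^ 2) ≤ 28 * R / (e * R ^ 2) := by gcongr; norm_num
    _ = 28 / (e * R) := by field_simp

theorem deriv_deriv_barrierProfile_sq_le (he : 0 < e) (hR : 0 < R) (heR : 1 ≤ e * R)
    (hz : z ∈ Metric.ball x₀ R) :
    4 / (e * R ^ 2) * barrierProfile e R x₀ z ^ 3
        + 24 * (z - x₀) ^ 2 / (e * R ^ 2) ^ 2 * barrierProfile e R x₀ z ^ 4 ≤
      28 / (e * R) * barrierProfile e R x₀ z ^ 4 := by
  have hek := le_barrierProfile he.le hz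
  have hρ := sq_sub_sq_pos_of_mem_ball hz
  set k := barrierProfile e R x₀ z
  have hk : 0 < k := he.trans_le hek
  calc 4 / (e * R ^ 2) * k ^ 3 + 24 * (z - x₀) ^ 2 / (e * R ^ 2) ^ 2 * k ^ 4
      = 4 / (e * R) ^ 2 * (k ^ 3 * e) + 24 * (z - x₀) ^ 2 / (e * R ^ 2) ^ 2 * k ^ 4 := by
        field_simp
    _ ≤ 4 / (e * R) ^ 2 * (k ^ 3 * k) + 24 * R ^ 2 / (e * R ^ 2) ^ 2 * k ^ 4 := by
        gcongr ?_ * (_ * ?_) + 24 * ?_ / _ * _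
        linarith
    _ = 28 / ((e * R) * (e * R)) * k ^ 4 := by field_simp; ring
    _ ≤ 28 / ((e * R) * 1) * k ^ 4 := by gcongr
    _ = 28 / (e * R) * k ^ 4 := by rw [mul_one]

theorem exists_isCompact_barrier_le_subset (δ T x₀ C : ℝ) (he : 0 < e) (hR : 0 < R) :
    ∃ K, IsCompact K ∧ K ⊆ Set.Ioc δ T ×ˢ Metric.ball x₀ R ∧
      ∀ p ∈ Set.Ioc δ T ×ˢ Metric.ball x₀ R,
        1 / (p.1 - δ) + barrierProfile e R x₀ p.2 ^ 2 ≤ C → p ∈ K := by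
  have htime : IsClosed {p : ℝ × ℝ | 1 ≤ C * (p.1 - δ)} :=
    isClosed_le (by fun_prop) (by fun_prop)
  have hspace : IsClosed {p : ℝ × ℝ | e * (e * R ^ 2) ≤ C * (R ^ 2 - (p.2 - x₀) ^ 2)} :=
    isClosed_le (by fun_prop) (by fun_prop)
  have hrect : IsCompact (Set.Icc δ T ×ˢ Metric.closedBall x₀ R) :=
    isCompact_Icc.prod (isCompact_closedBall x₀ R)
  refine ⟨_, hrect.inter_right (htime.inter hspace), ?_, ?_⟩
  · rintro p ⟨⟨ht, hx⟩, hCt, hCx⟩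
    rw [Set.mem_ofPred_eq] at hCt hCx
    refine ⟨⟨ht.1.lt_of_ne ?_, ht.2⟩, Metric.mem_ball.2 (lt_of_le_of_ne hx fun hxR => ?_)⟩
    · intro hδ
      norm_num [← hδ] at hCt
    · rw [Real.dist_eq] at hxR
      rw [← sq_abs (p.2 - x₀), hxR, sub_self, mul_zero] at hCx
      exact hCx.not_gt (by positivity)
  · rintro p ⟨ht, hx⟩ hle
    have htδ : 0 < p.1 - δ := sub_pos.2 ht.1
    have hinv : 0 < 1 / (p.1 - δ) := one_div_pos.2 htδ
    have hk : e ≤ barrierProfile e R x₀ p.2 := le_barrierProfile he.le hx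
    have hspace_le : e * (e * R ^ 2) / (R ^ 2 - (p.2 - x₀) ^ 2) ≤ C := by
      rw [mul_div_assoc, ← barrierProfile]
      nlinarith
    exact ⟨⟨Set.Ioc_subset_Icc_self ht, Metric.ball_subset_closedBall hx⟩,
      (div_le_iff₀ htδ).1 (by nlinarith),
      (div_le_iff₀ (sq_sub_sq_pos_of_mem_ball hx)).1 hspace_le⟩

end BarrierProfile

/-- The excess of `∂V/∂x` over the barrier `1 / (t - δ) + (1 + V) k²`, where `k` is the profile
`barrierProfile e R x₀`; it is meant for `δ < t` and `|x - x₀| < R`. The factor `1 + V` is there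
because the drift `-V V_xx` in the equation of `∂V/∂x` is unbounded. -/
def gradientExcess (V : ℝ × ℝ → ℝ) (e R x₀ δ : ℝ) (p : ℝ × ℝ) : ℝ :=
  ∂ₓ V p - (1 / (p.1 - δ) + (1 + V p) * barrierProfile e R x₀ p.2 ^ 2)

namespace IsPressureSolution

variable {a : ℝ} {V : ℝ × ℝ → ℝ} {Ω : Set (ℝ × ℝ)}

section LocalEstimate

variable {e R δ T t x x₀ : ℝ}

theorem not_parabolic_max_gradientExcess (hV : IsPressureSolution a V Ω) (ha : 0 < a) (he : 0 < e)
    (hR : 28 * ((1 + a) ^ 2 / a + 1 + 1 / e) < e * R) (hp : (t, x) ∈ Ω) (ht : δ < t)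
    (hx : x ∈ Metric.ball x₀ R) (hpos : 0 < gradientExcess V e R x₀ δ (t, x))
    (hmax_x : IsLocalMax (fun z => gradientExcess V e R x₀ δ (t, z)) x) :
    ¬IsLocalMaxOn (fun τ => gradientExcess V e R x₀ δ (τ, x)) (Set.Iic t) t := by
  intro hmax_t
  have hR0 : 0 < R := Metric.pos_of_mem_ball hx
  have heR : 0 < e * R := by positivity
  have heR1 : 1 ≤ e * R := by
    have : 0 < (1 + a) ^ 2 / a + 1 / e := by positivity
    linarith
  have htδ : 0 < t - δ := sub_pos.2 ht
  have hg : HasDerivAt (fun τ => 1 / (τ - δ)) (-(1 / (t - δ)) ^ 2) t := by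
    simpa [one_div, neg_div] using ((hasDerivAt_id t).sub_const δ).fun_inv htδ.ne'
  have hh : ∀ᶠ z in 𝓝 x, HasDerivAt (fun y => barrierProfile e R x₀ y ^ 2)
      (4 * (z - x₀) / (e * R ^ 2) * barrierProfile e R x₀ z ^ 3) z :=
    (Metric.isOpen_ball.eventually_mem hx).mono fun z hz =>
      hasDerivAt_barrierProfile_sq he.ne' hR0.ne' hz
  have hle := hV.le_of_parabolic_max hp hg hh
    (hasDerivAt_deriv_barrierProfile_sq he.ne' hR0.ne' hx) hmax_x hmax_t
  refine hle.not_gt (barrier_supersolution ha (hV.pos _ hp) (one_div_pos.2 htδ).le he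
    (le_barrierProfile he.le hx) (sub_pos.1 hpos).le (by positivity) ?_
    (abs_deriv_barrierProfile_sq_le he hR0 hx)
    (deriv_deriv_barrierProfile_sq_le he hR0 heR1 hx))
  rwa [div_mul_eq_mul_div, div_lt_one heR]

theorem continuousOn_gradientExcess (hV : IsPressureSolution a V Ω)
    (hsub : Set.Ioc δ T ×ˢ Metric.ball x₀ R ⊆ Ω) :
    ContinuousOn (gradientExcess V e R x₀ δ) (Set.Ioc δ T ×ˢ Metric.ball x₀ R) := by
  have hVc : ContinuousOn V (Set.Ioc δ T ×ˢ Metric.ball x₀ R) := fun p hp =>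
    (hV.differentiableAt (hsub hp)).continuousAt.continuousWithinAt
  have hVxc : ContinuousOn (∂ₓ V) (Set.Ioc δ T ×ˢ Metric.ball x₀ R) := fun p hp =>
    (hV.differentiableAt_spaceDeriv (hsub hp)).continuousAt.continuousWithinAt
  have hprofile : ContinuousOn (fun p : ℝ × ℝ => barrierProfile e R x₀ p.2)
      (Set.Ioc δ T ×ˢ Metric.ball x₀ R) :=
    continuousOn_const.div (by fun_prop) fun p hp => (sq_sub_sq_pos_of_mem_ball hp.2).ne'
  have htime : ContinuousOn (fun p : ℝ × ℝ => 1 / (p.1 - δ)) (Set.Ioc δ T ×ˢ Metric.ball x₀ R) :=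
    continuousOn_const.div (by fun_prop) fun p hp => (sub_pos.2 hp.1.1).ne'
  exact hVxc.sub (htime.add ((continuousOn_const.add hVc).mul (hprofile.pow 2)))

theorem exists_isCompact_gradientExcess_pos_subset (hV : IsPressureSolution a V Ω) (he : 0 < e)
    (hR : 0 < R) (hsub : Set.Icc δ T ×ˢ Metric.closedBall x₀ R ⊆ Ω) :
    ∃ K, IsCompact K ∧ K ⊆ Set.Ioc δ T ×ˢ Metric.ball x₀ R ∧
      ∀ p ∈ Set.Ioc δ T ×ˢ Metric.ball x₀ R, 0 < gradientExcess V e R x₀ δ p → p ∈ K := by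
  obtain ⟨C, hC⟩ := (isCompact_Icc.prod (isCompact_closedBall x₀ R)).exists_bound_of_continuousOn
    fun p hp => (hV.differentiableAt_spaceDeriv (hsub hp)).continuousAt.continuousWithinAt
  obtain ⟨K, hK, hKsub, hmem⟩ := exists_isCompact_barrier_le_subset δ T x₀ C he hR
  refine ⟨K, hK, hKsub, fun p hp hpos => hmem p hp ?_⟩
  have hp' : p ∈ Set.Icc δ T ×ˢ Metric.closedBall x₀ R :=
    Set.prod_mono Set.Ioc_subset_Icc_self Metric.ball_subset_closedBall hp
  have hVpos := hV.pos _ (hsub hp')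
  calc 1 / (p.1 - δ) + barrierProfile e R x₀ p.2 ^ 2
      ≤ 1 / (p.1 - δ) + (1 + V p) * barrierProfile e R x₀ p.2 ^ 2 := by
        gcongr
        exact le_mul_of_one_le_left (sq_nonneg _) (le_add_of_nonneg_right hVpos.le)
    _ ≤ ∂ₓ V p := (sub_pos.1 hpos).le
    _ ≤ C := (le_abs_self _).trans (hC p hp')

theorem spaceDeriv_le_of_closedBall_subset (hV : IsPressureSolution a V Ω) (ha : 0 < a)
    (he : 0 < e) (hR : 28 * ((1 + a) ^ 2 / a + 1 + 1 / e) < e * R) (hδT : δ < T)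
    (hsub : Set.Icc δ T ×ˢ Metric.closedBall x₀ R ⊆ Ω) :
    ∂ₓ V (T, x₀) ≤ 1 / (T - δ) + (1 + V (T, x₀)) * e ^ 2 := by
  have hR0 : 0 < R := pos_of_mul_pos_right (lt_trans (by positivity) hR) he.le
  have hx₀ : x₀ ∈ Metric.ball x₀ R := Metric.mem_ball_self hR0
  have hsub' : Set.Ioc δ T ×ˢ Metric.ball x₀ R ⊆ Ω :=
    (Set.prod_mono Set.Ioc_subset_Icc_self Metric.ball_subset_closedBall).trans hsub
  have hcenter : barrierProfile e R x₀ x₀ = e := by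
    simp [barrierProfile, hR0.ne']
  by_contra! hlt
  obtain ⟨K, hK, hKsub, hKpos⟩ := hV.exists_isCompact_gradientExcess_pos_subset he hR0 hsub
  obtain ⟨t, x, hp, hpos, hmax_x, hmax_t⟩ := exists_parabolic_max Metric.isOpen_ball hK hKsub
    ((hV.continuousOn_gradientExcess hsub').mono hKsub) hKpos
    ⟨(T, x₀), ⟨Set.right_mem_Ioc.2 hδT, hx₀⟩, sub_pos.2 (by rwa [hcenter])⟩
  exact hV.not_parabolic_max_gradientExcess ha he hR (hsub' (hKsub hp)) (hKsub hp).1.1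
    (hKsub hp).2 hpos hmax_x hmax_t

end LocalEstimate

theorem spaceDeriv_le_one_div {T t x : ℝ} (ha : 0 < a)
    (hV : IsPressureSolution a V (Set.Ioo 0 T ×ˢ Set.univ)) (ht : t ∈ Set.Ioo 0 T) :
    ∂ₓ V (t, x) ≤ 1 / t := by
  have hbound : ∀ᶠ e in 𝓝[>] 0, ∂ₓ V (t, x) ≤ 1 / (t - e) + (1 + V (t, x)) * e ^ 2 := by
    filter_upwards [Ioo_mem_nhdsGT ht.1] with e he
    obtain ⟨R, hR⟩ := exists_gt (28 * ((1 + a) ^ 2 / a + 1 + 1 / e) / e)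
    refine hV.spaceDeriv_le_of_closedBall_subset ha he.1 ((div_lt_iff₀' he.1).1 hR) he.2 ?_
    exact Set.prod_mono (Set.Icc_subset_Ioo he.1 ht.2) (Set.subset_univ _)
  refine ge_of_tendsto ?_ hbound
  have hcont : ContinuousAt (fun e => 1 / (t - e) + (1 + V (t, x)) * e ^ 2) 0 :=
    (continuousAt_const.div (by fun_prop) (by simpa using ht.1.ne')).add (by fun_prop)
  simpa using hcont.tendsto.mono_left nhdsWithin_le_nhds

end IsPressureSolution

theorem rpow_add_one_le_mul_integral_rpow {g : ℝ → ℝ} {C r : ℝ} (hr : 0 ≤ r) (hC : 0 < C)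
    (hg : Differentiable ℝ g) (hg0 : ∀ x, 0 ≤ g x) (hgC : ∀ x, deriv g x ≤ C)
    (hint : Integrable fun x => g x ^ r) (x : ℝ) :
    g x ^ (r + 1) ≤ C * (r + 1) * ∫ y, g y ^ r := by
  set y₀ := x - g x / C
  have hy₀ : y₀ ≤ x := sub_le_self _ (div_nonneg (hg0 x) hC.le)
  have hline : ∀ y ≤ x, g x - C * (x - y) ≤ g y := fun y hy => by
    linarith [image_sub_le_mul_sub_of_deriv_le hg hgC hy]
  have htriangle : ∫ y in y₀..x, (C * y - C * y₀) ^ r = g x ^ (r + 1) / (C * (r + 1)) := by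
    have hend : C * x - C * y₀ = g x := by simp only [y₀]; field_simp; ring
    rw [intervalIntegral.integral_comp_mul_sub (fun s => s ^ r) hC.ne', sub_self, hend,
      integral_rpow (Or.inl (by linarith)), zero_rpow (by positivity), smul_eq_mul]
    field_simp
    ring
  rw [← div_le_iff₀' (by positivity), ← htriangle, intervalIntegral.integral_of_le hy₀]
  have hmono : ∫ y in Set.Ioc y₀ x, (C * y - C * y₀) ^ r ≤ ∫ y in Set.Ioc y₀ x, g y ^ r := by
    refine setIntegral_mono_on ?_ hint.integrableOn measurableSet_Ioc fun y hy => ?_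
    · exact ((by fun_prop : Continuous fun y => C * y - C * y₀).rpow_const
        fun _ => Or.inr hr).integrableOn_Ioc
    · have : g x - C * (x - y) = C * y - C * y₀ := by simp only [y₀]; field_simp; ring
      refine rpow_le_rpow ?_ (this ▸ hline y hy.2) hr
      nlinarith [hy.1]
  exact hmono.trans (setIntegral_le_integral hint (ae_of_all _ fun y => rpow_nonneg (hg0 y) r))

theorem le_rpow_integral_of_deriv_rpow_le {q t : ℝ} {f : ℝ → ℝ} (hq : 1 < q) (ht : 0 < t)
    (hf : Differentiable ℝ f) (hpos : ∀ x, 0 < f x)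
    (hderiv : ∀ x, deriv (fun z => f z ^ (q - 1)) x ≤ 1 / t) (hint : Integrable f) (x : ℝ) :
    f x ≤ (q * (∫ y, f y) / ((q - 1) * t)) ^ (1 / q) := by
  have hq1 : 0 < q - 1 := sub_pos.2 hq
  have hq0 : 0 < q := one_pos.trans hq
  have hpow : ∀ y, (f y ^ (q - 1)) ^ (q - 1)⁻¹ = f y := fun y =>
    rpow_rpow_inv (hpos y).le hq1.ne'
  have hpow' : (f x ^ (q - 1)) ^ ((q - 1)⁻¹ + 1) = f x ^ q := by
    rw [← rpow_mul (hpos x).le]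
    congr 1
    field_simp
    ring
  have hbound := rpow_add_one_le_mul_integral_rpow (inv_pos.2 hq1).le (one_div_pos.2 ht)
    (fun y => (hf y).rpow_const (Or.inl (hpos y).ne')) (fun y => (rpow_pos_of_pos (hpos y) _).le)
    hderiv (by simpa only [hpow] using hint) x
  simp only [hpow, hpow'] at hbound
  rw [one_div q, le_rpow_inv_iff_of_pos (hpos x).le ?_ hq0]
  · refine hbound.trans_eq ?_
    field_simp
    ring
  · have : 0 ≤ ∫ y, f y := integral_nonneg fun y => (hpos y).le
    positivity

theorem stmt19_general {q T : ℝ} (hq1 : 1 < q) (hq2 : q < 2) {u : ℝ → ℝ → ℝ}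
    (hu : ContDiffOn ℝ 3 (fun p : ℝ × ℝ => u p.1 p.2) (Set.Ioo 0 T ×ˢ Set.univ))
    (hpos : ∀ t ∈ Set.Ioo 0 T, ∀ x, 0 < u t x)
    (hpde : ∀ t ∈ Set.Ioo 0 T, ∀ x, HasDerivAt (fun τ => u τ x)
      (deriv (deriv (u t)) x - (1 / q) * deriv (fun z => u t z ^ q) x) t)
    {t : ℝ} (ht : t ∈ Set.Ioo 0 T) :
    (∀ x, deriv (fun z => u t z ^ (q - 1)) x ≤ 1 / t) ∧
      (Integrable (u t) → ∀ x, u t x ≤ (q * (∫ y, u t y) / ((q - 1) * t)) ^ (1 / q)) := by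
  have hΩ : IsOpen (Set.Ioo 0 T ×ˢ (Set.univ : Set ℝ)) := isOpen_Ioo.prod isOpen_univ
  have hmem : ∀ x : ℝ, (t, x) ∈ Set.Ioo 0 T ×ˢ Set.univ := fun x => ⟨ht, trivial⟩
  have hV := isPressureSolution_rpow hq1.ne' hΩ hu (fun p hp => hpos p.1 hp.1 p.2)
    fun p hp => timeDeriv_eq_of_divergence_form (by positivity) hΩ (hu.of_le (by norm_num)) hp
      (hpos p.1 hp.1 p.2) (hpde p.1 hp.1 p.2)
  have hentropy : ∀ x, deriv (fun z => u t z ^ (q - 1)) x ≤ 1 / t := fun x =>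
    (hasDerivAt_spaceDeriv (hV.differentiableAt (hmem x))).deriv.trans_le <|
      hV.spaceDeriv_le_one_div (div_pos (sub_pos.2 hq2) (sub_pos.2 hq1)) ht
  have hdiff : Differentiable ℝ (u t) := fun x =>
    (hasDerivAt_spaceDeriv ((hu.contDiffAt (hΩ.mem_nhds (hmem x))).differentiableAt
      three_ne_zero)).differentiableAt
  exact ⟨hentropy, le_rpow_integral_of_deriv_rpow_le hq1 ht.1 hdiff (hpos t ht) hentropy⟩

/-- **entropy inequality and decay.** Let `1 < q < 2` and let `u` be a
smooth, strictly positive solution of `u_t - u_{xx} + (1/q)(u^q)_x = 0` on `ℝ × (0,∞)`.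
Then `∂_x (u^{q-1})(x,t) ≤ 1/t` for all `x ∈ ℝ`, `t > 0`.  Consequently, if moreover
`u(·,t) ∈ L¹(ℝ)` with `∫ u(·,t) = M` for all `t > 0`, then
`u(x,t) ≤ (qM/((q-1)t))^{1/q}` for all `x ∈ ℝ`, `t > 0`. -/
theorem stmt19 (q : ℝ) (hq1 : 1 < q) (hq2 : q < 2)
    (u : ℝ → ℝ → ℝ)
    (hsmooth : ContDiffOn ℝ (⊤ : ℕ∞) (fun p : ℝ × ℝ => u p.1 p.2) (Set.Ioi 0 ×ˢ Set.univ))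
    (hpos : ∀ t : ℝ, 0 < t → ∀ x : ℝ, 0 < u t x)
    (hpde : ∀ t : ℝ, 0 < t → ∀ x : ℝ,
      HasDerivAt (fun τ => u τ x)
        (deriv (deriv (u t)) x - (1 / q) * deriv (fun z => u t z ^ q) x) t) :
    (∀ t : ℝ, 0 < t → ∀ x : ℝ, deriv (fun z => u t z ^ (q - 1)) x ≤ 1 / t) ∧
      ∀ M : ℝ,
        (∀ t : ℝ, 0 < t → Integrable (u t) ∧ (∫ x, u t x) = M) →
        ∀ t : ℝ, 0 < t → ∀ x : ℝ,
          u t x ≤ (q * M / ((q - 1) * t)) ^ (1 / q) := by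
  have hgen : ∀ t : ℝ, 0 < t → _ := fun t ht => stmt19_general (T := t + 1) hq1 hq2
    ((contDiffOn_infty.1 hsmooth 3).mono (Set.prod_mono Set.Ioo_subset_Ioi_self subset_rfl))
    (fun s hs => hpos s hs.1) (fun s hs => hpde s hs.1) ⟨ht, lt_add_one t⟩
  exact ⟨fun t ht => (hgen t ht).1, fun M hM t ht => (hM t ht).2 ▸ (hgen t ht).2 (hM t ht).1⟩
end
end
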